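/- arXiv:1401.6252 — 2 statements merged into one kernel-verified Lean document; each statement's English description precedes it below -/
import Mathlib

section
/- Let k be a positive integer, let (α,β) be one of (2,2), (4,4), (6,4), (10,4), and let C be a self-dual Z4-code of length 24k+α with minimum Lee weight 8k+β. Then every binary self-dual code containing the residue code C^(1) is an s-extremal self-dual code with minimum Hamming weight 4k+2. -/
open Finset

namespace Z4Note

variable {ι : Type*} [Fintype ι]

/-- Hamming weight of a binary vector. -/
def hWt (x : ι → ZMod 2) : ℕ := (Finset.univ.filter fun i => x i ≠ 0).card

/-- Lee value of an element of `ZMod 4`:  0 ↦ 0, 1 ↦ 1, 2 ↦ 2, 3 ↦ 1. -/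
def leeVal (a : ZMod 4) : ℕ := min a.val (4 - a.val)

/-- Lee weight `n₁(x) + 2 n₂(x) + n₃(x)`. -/
def leeWt (x : ι → ZMod 4) : ℕ := ∑ i, leeVal (x i)

/-- Euclidean weight `n₁(x) + 4 n₂(x) + n₃(x)`. -/
def eucWt (x : ι → ZMod 4) : ℕ := ∑ i, (leeVal (x i)) ^ 2

/-- Number of coordinates of `x` equal to `a`. -/
def nCount (a : ZMod 4) (x : ι → ZMod 4) : ℕ := (Finset.univ.filter fun i => x i = a).card

/-- Dual of a `ZMod 4`-code (as a set), w.r.t. the standard inner product. -/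
def dualZ4 (C : Set (ι → ZMod 4)) : Set (ι → ZMod 4) :=
  {x | ∀ y ∈ C, ∑ i, x i * y i = 0}

/-- Dual of a binary code (as a set), w.r.t. the standard inner product. -/
def dual2 (C : Set (ι → ZMod 2)) : Set (ι → ZMod 2) :=
  {x | ∀ y ∈ C, ∑ i, x i * y i = 0}

/-- A `ZMod 4`-code is self-dual if it equals its dual. -/
def SelfDualZ4 (C : Submodule (ZMod 4) (ι → ZMod 4)) : Prop :=
  (C : Set (ι → ZMod 4)) = dualZ4 (C : Set (ι → ZMod 4))

/-- A binary code is self-dual if it equals its dual. -/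
def SelfDual2 (D : Submodule (ZMod 2) (ι → ZMod 2)) : Prop :=
  (D : Set (ι → ZMod 2)) = dual2 (D : Set (ι → ZMod 2))

/-- Coordinatewise reduction modulo 2. -/
def res2 (x : ι → ZMod 4) : ι → ZMod 2 :=
  fun i => ZMod.castHom (by norm_num : (2:ℕ) ∣ 4) (ZMod 2) (x i)

/-- The residue code `C⁽¹⁾ = {c mod 2 : c ∈ C}`. -/
def residue (C : Set (ι → ZMod 4)) : Set (ι → ZMod 2) := res2 '' C

/-- Minimum Lee weight among nonzero codewords. -/
noncomputable def minLee (C : Set (ι → ZMod 4)) : ℕ := sInf {d | ∃ x ∈ C, x ≠ 0 ∧ leeWt x = d}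

/-- Minimum Euclidean weight among nonzero codewords. -/
noncomputable def minEuc (C : Set (ι → ZMod 4)) : ℕ := sInf {d | ∃ x ∈ C, x ≠ 0 ∧ eucWt x = d}

/-- Minimum Hamming weight among nonzero codewords of a binary code. -/
noncomputable def minHam (C : Set (ι → ZMod 2)) : ℕ := sInf {d | ∃ x ∈ C, x ≠ 0 ∧ hWt x = d}

/-- A binary code is doubly even if all weights are divisible by 4. -/
def DoublyEven (C : Set (ι → ZMod 2)) : Prop := ∀ x ∈ C, 4 ∣ hWt x

/-- A binary code is singly even if some codeword has weight not divisible by 4. -/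
def SinglyEven (C : Set (ι → ZMod 2)) : Prop := ∃ x ∈ C, ¬ 4 ∣ hWt x

/-- A self-dual `ZMod 4`-code is Type II if all Euclidean weights are divisible by 8. -/
def TypeII (C : Set (ι → ZMod 4)) : Prop := ∀ x ∈ C, 8 ∣ eucWt x

/-- The doubly even subcode of a binary code. -/
def evenSubcode (D : Set (ι → ZMod 2)) : Set (ι → ZMod 2) := {x ∈ D | 4 ∣ hWt x}

/-- The shadow `S = D₀^⊥ \ D` of a binary code. -/
def shadow (D : Set (ι → ZMod 2)) : Set (ι → ZMod 2) := dual2 (evenSubcode D) \ D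

/-- A binary singly even self-dual code is s-extremal if equality holds in the
Bachoc–Gaborit bound relating the minimum weight of the code and of its shadow. -/
def SExtremal (D : Submodule (ZMod 2) (ι → ZMod 2)) : Prop :=
  SelfDual2 D ∧ SinglyEven (D : Set (ι → ZMod 2)) ∧
  ((¬ (Fintype.card ι % 24 = 22 ∧
        minHam (D : Set (ι → ZMod 2)) = 4 * (Fintype.card ι / 24) + 6)) →
      minHam (shadow (D : Set (ι → ZMod 2))) + 2 * minHam (D : Set (ι → ZMod 2)) =
        Fintype.card ι / 2 + 4) ∧
  ((Fintype.card ι % 24 = 22 ∧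
        minHam (D : Set (ι → ZMod 2)) = 4 * (Fintype.card ι / 24) + 6) →
      minHam (shadow (D : Set (ι → ZMod 2))) + 2 * minHam (D : Set (ι → ZMod 2)) =
        Fintype.card ι / 2 + 8)

/-- Equivalence of `ZMod 4`-codes: coordinate permutation together with sign changes. -/
def Z4Equiv (C C' : Set (ι → ZMod 4)) : Prop :=
  ∃ σ : Equiv.Perm ι, ∃ ε : ι → ZMod 4, (∀ i, ε i = 1 ∨ ε i = -1) ∧
    C' = (fun x => fun i => ε i * x (σ i)) '' C

/-- Covering radius of a binary code. -/
noncomputable def covRad (C : Set (ι → ZMod 2)) : ℕ :=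
  sInf {R | ∀ v : ι → ZMod 2, ∃ c ∈ C, hWt (v - c) ≤ R}

/-- Entry `(i,j)` of the circulant matrix with first row `r`. -/
def circEntry {m : ℕ} (r : Fin m → ZMod 4) (i j : Fin m) : ZMod 4 := r (j - i)

/-- Entry `(i,j)` of the negacirculant matrix with first row `r`. -/
def negaEntry {m : ℕ} (r : Fin m → ZMod 4) (i j : Fin m) : ZMod 4 :=
  if i.val ≤ j.val then r (j - i) else - r (j - i)

/-- The bordered part `B` of the generator matrix of a bordered double circulant code. -/
def bdcB {m : ℕ} (α β γ : ZMod 4) (r : Fin m → ZMod 4) :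
    Fin (m+1) → Fin (m+1) → ZMod 4 :=
  Fin.cases (Fin.cases α fun _ => β) (fun i' => Fin.cases γ fun j' => circEntry r i' j')

/-- Row `i` of the generator matrix `(I | B)` of a bordered double circulant code. -/
def bdcRow {m : ℕ} (α β γ : ZMod 4) (r : Fin m → ZMod 4) (i : Fin (m+1)) :
    (Fin (m+1) ⊕ Fin (m+1)) → ZMod 4 :=
  Sum.elim (fun j => if j = i then 1 else 0) (bdcB α β γ r i)

/-- The bordered double circulant code of length `2(m+1)`. -/
def bdcCode {m : ℕ} (α β γ : ZMod 4) (r : Fin m → ZMod 4) :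
    Submodule (ZMod 4) ((Fin (m+1) ⊕ Fin (m+1)) → ZMod 4) :=
  Submodule.span (ZMod 4) (Set.range (bdcRow α β γ r))

/-- The block matrix `[[A, B], [-Bᵀ, Aᵀ]]` built from negacirculant `A`, `B`. -/
def fourNegaM {n : ℕ} (a b : Fin n → ZMod 4) :
    (Fin n ⊕ Fin n) → (Fin n ⊕ Fin n) → ZMod 4
  | Sum.inl i, Sum.inl j => negaEntry a i j
  | Sum.inl i, Sum.inr j => negaEntry b i j
  | Sum.inr i, Sum.inl j => - negaEntry b j i
  | Sum.inr i, Sum.inr j => negaEntry a j i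

/-- Row `i` of the generator matrix `(I | M)` of a four-negacirculant code. -/
def fourNegaRow {n : ℕ} (a b : Fin n → ZMod 4) (i : Fin n ⊕ Fin n) :
    ((Fin n ⊕ Fin n) ⊕ (Fin n ⊕ Fin n)) → ZMod 4 :=
  Sum.elim (fun j => if j = i then 1 else 0) (fourNegaM a b i)

/-- The four-negacirculant code of length `4n`. -/
def fourNegaCode {n : ℕ} (a b : Fin n → ZMod 4) :
    Submodule (ZMod 4) (((Fin n ⊕ Fin n) ⊕ (Fin n ⊕ Fin n)) → ZMod 4) :=
  Submodule.span (ZMod 4) (Set.range (fourNegaRow a b))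

end Z4Note
namespace Z4Aux
open PowerSeries

theorem ps_res (U V : ℚ⟦X⟧) (hUV : U * V = 1) (r l : ℕ) (hl : 1 ≤ l) :
    coeff (2*(r+l)+1) ((X^2*U)^r * (d⁄dX ℚ (X^2*U)) * V^(r+l+1)) = 0 := by
  have hd : (d⁄dX ℚ U) * V + U * d⁄dX ℚ V = 0 := by
    have := congrArg (d⁄dX ℚ) hUV
    rw [Derivation.leibniz] at this
    simp only [smul_eq_mul, Derivation.map_one_eq_zero] at this
    linear_combination this
  have hZ : d⁄dX ℚ (X^2*U) = 2*X*U + X^2 * d⁄dX ℚ U := by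
    rw [Derivation.leibniz, Derivation.leibniz_pow]
    simp [smul_eq_mul, PowerSeries.derivative_X]
    ring
  obtain ⟨l, rfl⟩ : ∃ m, l = m+1 := ⟨l-1, by omega⟩
  have hVl : d⁄dX ℚ (V^(l+1)) = (l+1) * V^l * d⁄dX ℚ V := by
    rw [Derivation.leibniz_pow]; simp [smul_eq_mul]; ring
  have hU : U^r * V^r = 1 := by rw [← mul_pow, hUV, one_pow]
  have key : ((l:ℚ⟦X⟧)+1) * ((X^2*U)^r * (d⁄dX ℚ (X^2*U)) * V^(r+(l+1)+1)) =
      (2*((l:ℚ⟦X⟧)+1)*(V^(l+1)) - X * d⁄dX ℚ (V^(l+1))) * X^(2*r+1) := by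
    rw [hZ, hVl]
    have h1 : (X^2*U)^r * (2*X*U + X^2 * d⁄dX ℚ U) * V^(r+(l+1)+1)
        = X^(2*r) * (U^r*V^r) * (2*X*(U*V)*V^(l+1) + X^2 * ((d⁄dX ℚ U)*V) * V^l * V) := by ring
    rw [h1, hU, hUV]
    have h2 : (d⁄dX ℚ U)*V = - (U * d⁄dX ℚ V) := by linear_combination hd
    rw [h2]
    have h3 : X^2 * (-(U * d⁄dX ℚ V)) * V^l * V = - (X^2 * (U*V) * d⁄dX ℚ V * V^l) := by ring
    rw [h3, hUV]; ring
  have hc := congrArg (coeff (2*(r+(l+1))+1)) key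
  have e1 : 2*(r+(l+1))+1 = (2*l+1+1) + (2*r+1) := by ring
  have e2 : ((l:ℚ⟦X⟧)+1) = C ((l:ℚ)+1) := by simp
  have e3 : (2:ℚ⟦X⟧) = C (2:ℚ) := (map_ofNat C 2).symm
  rw [e2, coeff_C_mul] at hc
  have : coeff (2*(r+(l+1))+1) ((2*C ((l:ℚ)+1)*(V^(l+1)) - X * d⁄dX ℚ (V^(l+1))) * X^(2*r+1)) = 0 := by
    rw [e1, coeff_mul_X_pow, map_sub, coeff_succ_X_mul, e3, ← map_mul, coeff_C_mul, coeff_derivative]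
    push_cast; ring
  rw [this] at hc
  have : (l:ℚ)+1 ≠ 0 := by positivity
  simpa [this] using hc

theorem ps_key (U V w wi g : ℚ⟦X⟧) (hUV : U * V = 1) (hw : w = 1 - X^2) (hwi : w * wi = 1)
    (h M : ℕ) (hh : h ≠ 0) (K : ℚ) (hK : K ≠ 0) (P : Polynomial ℚ) (hP : P.natDegree ≤ M)
    (heq : w^h * Polynomial.aeval (X^2*U) P = C K * (1 + X^(2*M+4) * g)) :
    coeff (2*M) (wi^(h+1) * V^(M+1)) = 0 := by
  have hG : Polynomial.aeval (X^2*U) P = C K * (wi^h + X^(2*M+4) * (wi^h * g)) := by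
    have : wi^h * (w^h * Polynomial.aeval (X^2*U) P) = Polynomial.aeval (X^2*U) P := by
      rw [← mul_assoc, ← mul_pow, mul_comm wi, hwi]; simp
    rw [← this, heq]; ring
  have hdw : d⁄dX ℚ wi = 2 * X * wi^2 := by
    have := congrArg (d⁄dX ℚ) hwi
    rw [Derivation.leibniz, hw] at this
    rw [hw] at hwi
    simp only [smul_eq_mul, Derivation.map_one_eq_zero, map_sub, Derivation.leibniz_pow, PowerSeries.derivative_X] at this
    simp at this
    linear_combination wi * this + (- d⁄dX ℚ wi) * hwi
  have hdwh : d⁄dX ℚ (wi^h) = 2 * (h:ℚ⟦X⟧) * X * wi^(h+1) := by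
    obtain ⟨m, rfl⟩ : ∃ m, h = m+1 := ⟨h-1, by omega⟩
    rw [Derivation.leibniz_pow, hdw]; simp [smul_eq_mul]; ring
  have hL : coeff (2*M+1) (d⁄dX ℚ (Polynomial.aeval (X^2*U) P) * V^(M+1)) = 0 := by
    rw [Polynomial.aeval_eq_sum_range' (n := M+1) (by omega), map_sum, Finset.sum_mul, map_sum]
    apply Finset.sum_eq_zero
    intro j hj
    rw [Finset.mem_range] at hj
    rcases j with _ | r
    · simp
    · have := ps_res U V hUV r (M-r) (by omega)
      rw [show r + (M-r) = M by omega] at this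
      rw [Derivation.map_smul, Derivation.leibniz_pow, smul_mul_assoc, coeff_smul]
      simp only [Nat.add_sub_cancel, smul_eq_mul, nsmul_eq_mul]
      rw [mul_assoc, show (((r+1:ℕ):ℚ⟦X⟧)) = C ((r+1:ℕ):ℚ) by simp, coeff_C_mul, this]; simp
  rw [hG, Derivation.leibniz] at hL
  have hC : d⁄dX ℚ (C K : ℚ⟦X⟧) = 0 := by simp
  rw [hC, map_add, hdwh, Derivation.leibniz, Derivation.leibniz_pow] at hL
  simp only [smul_eq_mul, PowerSeries.derivative_X, nsmul_eq_mul] at hL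
  have : (C K * (2 * (h:ℚ⟦X⟧) * X * wi^(h+1) + (X^(2*M+4) * d⁄dX ℚ (wi^h * g) + wi^h*g * (((2*M+4:ℕ):ℚ⟦X⟧) * (X^(2*M+4-1) * 1)))) + (wi^h + X^(2*M+4) * (wi^h * g)) * 0) * V^(M+1)
     = C (2 * h * K) * (X * (wi^(h+1) * V^(M+1))) + X^(2*M+3) * (C K * (X * d⁄dX ℚ (wi^h * g) + wi^h * g * ((2*M+4:ℕ):ℚ⟦X⟧)) * V^(M+1)) := by
    rw [show 2*M+4-1 = 2*M+3 by omega]; simp only [map_mul, map_natCast, map_ofNat]; ring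
  rw [this, map_add, coeff_C_mul, coeff_succ_X_mul, coeff_X_pow_mul'] at hL
  rw [if_neg (by omega), add_zero] at hL
  have : (2 * h * K : ℚ) ≠ 0 := by positivity
  exact (mul_eq_zero.mp hL).resolve_left this

def nn (f : ℚ⟦X⟧) : Prop := ∀ n, 0 ≤ coeff n f
theorem nn_mul {f g : ℚ⟦X⟧} (hf : nn f) (hg : nn g) : nn (f*g) := fun n => by
  rw [coeff_mul]; exact Finset.sum_nonneg fun p _ => mul_nonneg (hf _) (hg _)
theorem nn_pow {f : ℚ⟦X⟧} (hf : nn f) (m : ℕ) : nn (f^m) := by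
  induction m with
  | zero => intro n; rw [pow_zero, coeff_one]; split_ifs <;> norm_num
  | succ m ih => rw [pow_succ]; exact nn_mul ih hf
theorem nn_pos {f g : ℚ⟦X⟧} (hf : nn f) (hg : nn g) (n : ℕ) (h0 : 0 < coeff 0 f) (h1 : 0 < coeff n g) :
    0 < coeff n (f*g) := by
  rw [coeff_mul]
  exact Finset.sum_pos' (fun p _ => mul_nonneg (hf _) (hg _)) ⟨(0,n), by simp, mul_pos h0 h1⟩

/-- sign pattern + 0 - 0 -/
def alt (f : ℚ⟦X⟧) : Prop := ∀ n, (n % 4 = 0 → 0 ≤ coeff n f) ∧ (n % 4 = 2 → coeff n f ≤ 0) ∧ (n % 2 = 1 → coeff n f = 0)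
theorem alt_term {f g : ℚ⟦X⟧} (hf : alt f) (hg : alt g) (i j : ℕ) :
   ((i+j) % 4 = 0 → 0 ≤ coeff i f * coeff j g) ∧ ((i+j) % 4 = 2 → coeff i f * coeff j g ≤ 0) ∧ ((i+j) % 2 = 1 → coeff i f * coeff j g = 0) := by
  obtain ⟨f0, f2, f1⟩ := hf i
  obtain ⟨g0, g2, g1⟩ := hg j
  rcases (by omega : i % 2 = 1 ∨ i % 4 = 0 ∨ i % 4 = 2) with h | h | h
  · simp [f1 h]
  all_goals
    rcases (by omega : j % 2 = 1 ∨ j % 4 = 0 ∨ j % 4 = 2) with h' | h' | h'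
    · simp [g1 h']
    all_goals
      refine ⟨fun hh => ?_, fun hh => ?_, fun hh => by omega⟩ <;> first | omega | skip
  · exact mul_nonneg (f0 h) (g0 h')
  · exact mul_nonpos_of_nonneg_of_nonpos (f0 h) (g2 h')
  · exact mul_nonpos_of_nonpos_of_nonneg (f2 h) (g0 h')
  · exact mul_nonneg_of_nonpos_of_nonpos (f2 h) (g2 h')
theorem alt_mul {f g : ℚ⟦X⟧} (hf : alt f) (hg : alt g) : alt (f*g) := fun n => by
  rw [coeff_mul]
  refine ⟨fun hn => Finset.sum_nonneg fun p hp => ?_, fun hn => Finset.sum_nonpos fun p hp => ?_, fun hn => Finset.sum_eq_zero fun p hp => ?_⟩ <;>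
  rw [Finset.HasAntidiagonal.mem_antidiagonal] at hp
  · exact (alt_term hf hg p.1 p.2).1 (hp ▸ hn)
  · exact (alt_term hf hg p.1 p.2).2.1 (hp ▸ hn)
  · exact (alt_term hf hg p.1 p.2).2.2 (hp ▸ hn)
theorem alt_pow {f : ℚ⟦X⟧} (hf : alt f) (m : ℕ) : alt (f^m) := by
  induction m with
  | zero => 
    intro n; rw [pow_zero, coeff_one]
    refine ⟨fun _ => by split_ifs <;> norm_num, fun _ => by rw [if_neg (by omega)], fun _ => by rw [if_neg (by omega)]⟩
  | succ m ih => rw [pow_succ]; exact alt_mul ih hf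
theorem alt_pos {f g : ℚ⟦X⟧} (hf : alt f) (hg : alt g) (n : ℕ) (hn : n % 4 = 0) (h0 : 0 < coeff 0 f) (h1 : 0 < coeff n g) :
    0 < coeff n (f*g) := by
  rw [coeff_mul]
  exact Finset.sum_pos' (fun p hp => (alt_term hf hg p.1 p.2).1 (Finset.HasAntidiagonal.mem_antidiagonal.mp hp ▸ hn)) ⟨(0,n), by simp, mul_pos h0 h1⟩

def geo (d : ℕ) : ℚ⟦X⟧ := PowerSeries.mk fun n => if d ∣ n then 1 else 0
theorem geo_mul (d : ℕ) (hd : 0 < d) : (1 - X^d) * geo d = 1 := by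
  ext n
  rw [sub_mul, one_mul, map_sub, coeff_X_pow_mul', coeff_one, geo, coeff_mk]
  by_cases hn : n = 0
  · subst hn; simp [hd.ne']
  rw [if_neg hn]
  by_cases hdn : d ≤ n
  · obtain ⟨m, rfl⟩ := Nat.exists_eq_add_of_le hdn
    rw [if_pos hdn, coeff_mk]
    simp
  · rw [if_neg hdn, if_neg (fun h => hdn (Nat.le_of_dvd (by omega) h))]; simp
theorem geo0 (d : ℕ) : coeff 0 (geo d) = 1 := by simp [geo]
theorem geo_nn (d : ℕ) : nn (geo d) := fun n => by rw [geo, coeff_mk]; split_ifs <;> norm_num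
theorem geo_alt : alt (geo 4) := fun n => by
  rw [geo, coeff_mk]
  refine ⟨fun _ => by split_ifs <;> norm_num, fun _ => by rw [if_neg (by omega)], fun _ => by rw [if_neg (by omega)]⟩
theorem w_alt : alt (1 - X^2) := fun n => by
  rw [map_sub, coeff_one, coeff_X_pow]
  refine ⟨fun _ => ?_, fun _ => ?_, fun _ => by rw [if_neg (by omega), if_neg (by omega)]; simp⟩
  · rw [if_neg (by omega : ¬ n = 2)]; split_ifs <;> norm_num
  · rw [if_neg (by omega : ¬ n = 0)]; split_ifs <;> norm_num

noncomputable def jj : ℚ⟦X⟧ := (1 - X^2) * geo 4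
theorem jj_mul : (1 + X^2) * jj = 1 := by
  have := geo_mul 4 (by norm_num)
  rw [jj]; linear_combination this
theorem geo_jj : geo 2 * jj = geo 4 := by
  rw [jj]; linear_combination geo 4 * geo_mul 2 (by norm_num)
noncomputable def UU : ℚ⟦X⟧ := (1+X^2)^2 * geo 2 ^ 4
noncomputable def VV : ℚ⟦X⟧ := (1-X^2)^4 * jj ^ 2
theorem UV : UU * VV = 1 := by
  have h1 := geo_mul 2 (by norm_num)
  have h2 := jj_mul
  have : UU * VV = ((1 - X^2) * geo 2)^4 * ((1+X^2)*jj)^2 := by rw [UU, VV]; ring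
  rw [this, h1, h2]; simp

theorem cA (k e : ℕ) (hk : 0 < k) :
    coeff (2*(2*k-1)) (geo 2 ^ (12*k+e+1) * VV^(2*k-1+1)) ≠ 0 := by
  have h1 := geo_mul 2 (by norm_num)
  have : geo 2 ^ (12*k+e+1) * VV^(2*k-1+1) = (geo 4 ^ (4*k) * geo 2 ^ e) * geo 2 := by
    rw [show 2*k-1+1 = 2*k by omega]
    have : geo 2 ^ (12*k+e+1) * VV^(2*k) = ((1 - X^2) * geo 2)^(8*k) * ((geo 2 * jj)^(4*k) * geo 2^e * geo 2) := by
      rw [VV]; generalize (1 - X^2 : ℚ⟦X⟧) = w; ring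
    rw [this, h1, geo_jj]; simp
  rw [this]
  apply ne_of_gt
  apply nn_pos (nn_mul (nn_pow (geo_nn _) _) (nn_pow (geo_nn _) _)) (geo_nn _)
  · simp [geo]
  · simp [geo]

theorem cB (k e : ℕ) (he : 1 ≤ e) (he' : e ≤ 5) :
    coeff (2*(2*k)) (geo 2 ^ (12*k+e+1) * VV^(2*k+1)) ≠ 0 := by
  have h1 := geo_mul 2 (by norm_num)
  have : geo 2 ^ (12*k+e+1) * VV^(2*k+1) = ((1-X^2)^(5-e) * geo 4 ^ (4*k+1)) * geo 4 := by
    obtain ⟨f, rfl⟩ : ∃ f, e = f+1 := ⟨e-1, by omega⟩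
    obtain ⟨d, hd⟩ : ∃ d, 4 = f+d := ⟨4-f, by omega⟩
    have : geo 2 ^ (12*k+(f+1)+1) * VV^(2*k+1) = ((1 - X^2) * geo 2)^(8*k+f) * ((geo 2 * jj)^(4*k+1) * (geo 2 * jj) * (1-X^2)^d) := by
      rw [VV]
      have : ((1 - X^2:ℚ⟦X⟧)^4 * jj^2)^(2*k+1) = (1-X^2)^(8*k) * (1-X^2)^4 * jj^(4*k+2) := by
        generalize (1 - X^2 : ℚ⟦X⟧) = w; ring
      rw [this]; generalize (1 - X^2 : ℚ⟦X⟧) = w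
      rw [show w^4 = w^f*w^d by rw [← pow_add, ← hd]]; ring
    rw [this, h1, geo_jj, show 5-(f+1) = d by omega]; ring
  rw [this]
  apply ne_of_gt
  apply alt_pos (alt_mul (alt_pow w_alt _) (alt_pow geo_alt _)) geo_alt _ (by omega)
  · simp [geo]
  · rw [geo, coeff_mk, if_pos (by omega)]; norm_num

theorem cheb (j : ℕ) : ∃ P : Polynomial ℚ, P.natDegree ≤ j ∧
    (1 - X : ℚ⟦X⟧)^(8*j) + (1 + X)^(8*j) = (1 - X^2)^(4*j) * Polynomial.aeval (X^2*UU) P := by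
  have hz : (1 - X^2)^4 * (X^2*UU) = X^2*(1+X^2)^2 := by
    have h1 := geo_mul 2 (by norm_num)
    have : (1 - X^2)^4 * (X^2*UU) = X^2*(1+X^2)^2 * ((1 - X^2) * geo 2)^4 := by rw [UU]; ring
    rw [this, h1]; ring
  have hAB : (1 - X : ℚ⟦X⟧)^8 + (1+X)^8 = (1 - X^2)^4 * (2 + 64 * (X^2*UU)) := by
    linear_combination (-64) * hz
  induction j using Nat.twoStepInduction with
  | zero => exact ⟨2, by simp, by simp [← one_add_one_eq_two]⟩
  | one =>
    refine ⟨2 + 64 * Polynomial.X, ?_, ?_⟩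
    · compute_degree
    · rw [map_add, map_mul, map_ofNat, map_ofNat, Polynomial.aeval_X]; simpa using hAB
  | more j ih0 ih1 =>
    obtain ⟨P0, d0, h0⟩ := ih0
    obtain ⟨P1, d1, h1⟩ := ih1
    refine ⟨(2 + 64 * Polynomial.X) * P1 - P0, ?_, ?_⟩
    · refine (Polynomial.natDegree_sub_le _ _).trans (max_le ?_ (by omega))
      refine Polynomial.natDegree_mul_le.trans ?_
      have : (2 + 64 * Polynomial.X : Polynomial ℚ).natDegree ≤ 1 := by compute_degree
      omega
    · rw [map_sub, map_mul, map_add, map_mul, map_ofNat, map_ofNat, Polynomial.aeval_X]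
      have e : (1 - X : ℚ⟦X⟧)^(8*(j+2)) + (1 + X)^(8*(j+2)) =
        ((1 - X)^8 + (1+X)^8) * ((1 - X)^(8*(j+1)) + (1 + X)^(8*(j+1)))
          - ((1-X)*(1+X))^8 * ((1 - X)^(8*j) + (1 + X)^(8*j)) := by
        generalize (1 - X : ℚ⟦X⟧) = p
        generalize (1 + X : ℚ⟦X⟧) = q
        ring
      rw [e, hAB, h0, h1, show (1 - X : ℚ⟦X⟧)*(1+X) = 1 - X^2 by ring]
      generalize (1 - X^2 : ℚ⟦X⟧) = w
      ring

section comb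
open Z4Note
variable {ι : Type*} [Fintype ι]

def ip (x v : ι → ZMod 2) : ℕ := (Finset.univ.filter fun i => x i ≠ 0 ∧ v i ≠ 0).card

theorem hWt_add (x y : ι → ZMod 2) : hWt (x+y) + 2 * ip x y = hWt x + hWt y := by
  simp only [hWt, ip, Finset.card_filter, Finset.mul_sum, ← Finset.sum_add_distrib, Pi.add_apply]
  refine Finset.sum_congr rfl fun i _ => ?_
  generalize x i = a
  generalize y i = b
  revert a b; decide

theorem ip_add (x y v : ι → ZMod 2) : ∃ r, ip (x+y) v + 2 * r = ip x v + ip y v := by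
  refine ⟨∑ i, if x i ≠ 0 ∧ y i ≠ 0 ∧ v i ≠ 0 then 1 else 0, ?_⟩
  simp only [ip, Finset.card_filter, Finset.mul_sum, ← Finset.sum_add_distrib, Pi.add_apply]
  refine Finset.sum_congr rfl fun i _ => ?_
  generalize x i = a
  generalize y i = b
  generalize v i = c
  revert a b c; decide

theorem ip_comm (x v : ι → ZMod 2) : ip x v = ip v x := by
  simp only [ip, and_comm]

theorem ip_self (x : ι → ZMod 2) : ip x x = hWt x := by
  simp only [ip, hWt, and_self]

theorem ip_cast (x v : ι → ZMod 2) : ((ip x v : ℕ) : ZMod 2) = ∑ i, x i * v i := by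
  simp only [ip, Finset.card_filter, Nat.cast_sum]
  refine Finset.sum_congr rfl fun i _ => ?_
  generalize x i = a
  generalize v i = b
  revert a b; decide

theorem ip_even (x v : ι → ZMod 2) : ∑ i, x i * v i = 0 ↔ Even (ip x v) := by
  rw [← ip_cast, ZMod.natCast_eq_zero_iff_even]

theorem hWt_zero : hWt (0 : ι → ZMod 2) = 0 := by simp [hWt]
theorem hWt_pos {x : ι → ZMod 2} (h : hWt x = 0) : x = 0 := by
  rw [hWt, Finset.card_eq_zero, Finset.filter_eq_empty_iff] at h
  ext i; simpa using h (Finset.mem_univ i)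
theorem hWt_le (x : ι → ZMod 2) : hWt x ≤ Fintype.card ι := Finset.card_le_univ _
theorem ip_one (x : ι → ZMod 2) : ip x 1 = hWt x := by simp [ip, hWt]
theorem hWt_one : hWt (1 : ι → ZMod 2) = Fintype.card ι := by simp [hWt]

theorem mono {A : Type*} [CommRing A] (a b : A) (v : ι → ZMod 2) :
    a^(Fintype.card ι - hWt v) * b^(hWt v) = ∏ i, if v i ≠ 0 then b else a := by
  rw [Finset.prod_ite, Finset.prod_const, Finset.prod_const, mul_comm]
  congr 2
  have := Finset.card_filter_add_card_filter_not (s := (Finset.univ : Finset ι)) (fun i => v i ≠ 0)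
  rw [Finset.card_univ] at this
  rw [hWt]; omega

theorem trans4 {A : Type*} [CommRing A] (a b : A) (x : ι → ZMod 2) [DecidableEq ι] :
    ∑ v : ι → ZMod 2, (-1)^(ip x v) * (a^(Fintype.card ι - hWt v) * b^(hWt v)) =
      (a+b)^(Fintype.card ι - hWt x) * (a-b)^(hWt x) := by
  rw [mono]
  have : ∀ v : ι → ZMod 2, (-1)^(ip x v) * (a^(Fintype.card ι - hWt v) * b^(hWt v)) =
      ∏ i, (if v i ≠ 0 then (if x i ≠ 0 then -b else b) else a) := by
    intro v
    have h1 : (-1:A)^(ip x v) = ∏ i, if x i ≠ 0 ∧ v i ≠ 0 then -1 else 1 := by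
      rw [Finset.prod_ite, Finset.prod_const, Finset.prod_const, one_pow, mul_one, ip]
    rw [mono, h1, ← Finset.prod_mul_distrib]
    refine Finset.prod_congr rfl fun i _ => ?_
    by_cases h1 : x i = 0 <;> by_cases h2 : v i = 0 <;> simp [h1, h2]
  simp_rw [this]
  have h2 := Finset.prod_univ_sum (fun _ : ι => (Finset.univ : Finset (ZMod 2)))
    (fun i c => if c ≠ 0 then (if x i ≠ 0 then -b else b) else a)
  rw [Fintype.piFinset_univ] at h2
  rw [← h2]
  refine Finset.prod_congr rfl fun i _ => ?_
  rw [show (Finset.univ : Finset (ZMod 2)) = {0, 1} from rfl]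
  by_cases h1 : x i = 0 <;> simp [h1, sub_eq_add_neg]

def TT (D : Submodule (ZMod 2) (ι → ZMod 2)) : Set (ι → ZMod 2) :=
  {v | ∀ x ∈ D, 4 ∣ hWt x + 2 * ip x v}

theorem sd_mem {D : Submodule (ZMod 2) (ι → ZMod 2)} (hD : SelfDual2 D) (x : ι → ZMod 2) :
    x ∈ D ↔ ∀ y ∈ D, Even (ip x y) := by
  have : x ∈ (D : Set (ι → ZMod 2)) ↔ x ∈ dual2 (D : Set (ι → ZMod 2)) := by
    conv_lhs => rw [hD]
  rw [SetLike.mem_coe] at this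
  rw [this]
  simp only [dual2, Set.mem_ofPred_eq, ip_even, SetLike.mem_coe]

theorem sd_even {D : Submodule (ZMod 2) (ι → ZMod 2)} (hD : SelfDual2 D) {x : ι → ZMod 2}
    (hx : x ∈ D) : Even (hWt x) := by
  rw [← ip_self]; exact (sd_mem hD x).1 hx x hx

theorem sd_one {D : Submodule (ZMod 2) (ι → ZMod 2)} (hD : SelfDual2 D) : (1 : ι → ZMod 2) ∈ D := by
  rw [sd_mem hD]; intro y hy; rw [ip_comm, ip_one]; exact sd_even hD hy

theorem TT_compl {D : Submodule (ZMod 2) (ι → ZMod 2)} (hD : SelfDual2 D) {v : ι → ZMod 2}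
    (hv : v ∈ TT D) : v + 1 ∈ TT D := by
  intro x hx
  have h1 := hv x hx
  obtain ⟨r, hr⟩ := ip_add v 1 x
  rw [ip_comm 1, ip_one, ip_comm _ x, ip_comm _ x] at hr
  have := sd_even hD hx
  rw [Nat.even_iff] at this
  omega

theorem hWt_compl (v : ι → ZMod 2) : hWt (v+1) = Fintype.card ι - hWt v := by
  have := hWt_add v 1
  rw [ip_one, hWt_one] at this
  have := hWt_le v
  omega

theorem TT_diff {D : Submodule (ZMod 2) (ι → ZMod 2)} (hD : SelfDual2 D) {v t : ι → ZMod 2}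
    (hv : v ∈ TT D) (ht : t ∈ TT D) : hWt v % 4 = hWt t % 4 := by
  have hmem : t + v ∈ D := by
    rw [sd_mem hD]
    intro y hy
    have h1 := hv y hy
    have h2 := ht y hy
    obtain ⟨r, hr⟩ := ip_add t v y
    rw [ip_comm t, ip_comm v] at hr
    have := sd_even hD hy
    rw [Nat.even_iff] at this ⊢
    omega
  have h1 := ht _ hmem
  have h2 := hWt_add t (t+v)
  rw [ip_comm, ← add_assoc, show t + t = 0 by ext i; exact CharTwo.add_self_eq_zero _, zero_add] at h2
  omega

open Classical in
theorem orth {D : Submodule (ZMod 2) (ι → ZMod 2)} (hD : SelfDual2 D) (v : ι → ZMod 2) :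
    ∑ x : ι → ZMod 2 with x ∈ D, (-1:ℤ)^(hWt x / 2) * (-1)^(ip x v) =
      if v ∈ TT D then ((Finset.univ.filter fun x => x ∈ D).card : ℤ) else 0 := by
  split_ifs with hv
  · rw [Finset.card_eq_sum_ones, Nat.cast_sum]
    refine Finset.sum_congr rfl fun x hx => ?_
    have hx : x ∈ D := by simpa using hx
    have h1 := hv x hx
    have := sd_even hD hx
    rw [Nat.even_iff] at this
    rw [← pow_add, Even.neg_one_pow]; · simp
    rw [Nat.even_iff]; omega
  · simp only [TT, Set.mem_ofPred_eq, not_forall] at hv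
    obtain ⟨y, hy, hyv⟩ := hv
    have key : ∑ x : ι → ZMod 2 with x ∈ D, (-1:ℤ)^(hWt x / 2) * (-1)^(ip x v) =
        ∑ x : ι → ZMod 2 with x ∈ D, -((-1:ℤ)^(hWt x / 2) * (-1)^(ip x v)) := by
      refine Finset.sum_nbij' (fun x => x + y) (fun x => x + y) ?_ ?_ ?_ ?_ ?_
      · intro x hx; simp only [Finset.mem_filter, Finset.mem_univ, true_and] at hx ⊢; exact D.add_mem hx hy
      · intro x hx; simp only [Finset.mem_filter, Finset.mem_univ, true_and] at hx ⊢; exact D.add_mem hx hy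
      · intro x hx; ext i; simp [add_assoc, CharTwo.add_self_eq_zero]
      · intro x hx; ext i; simp [add_assoc, CharTwo.add_self_eq_zero]
      · intro x hx
        have hx : x ∈ D := by simpa using hx
        have h1 := hWt_add x y
        obtain ⟨r, hr⟩ := ip_add x y v
        have h2 := (sd_mem hD x).1 hx y hy
        have h3 := sd_even hD hx
        have h4 := sd_even hD hy
        rw [Nat.even_iff] at h2 h3 h4
        rw [← pow_add, ← pow_add]
        rcases Nat.even_or_odd (hWt x / 2 + ip x v) with h | h
        · have h' : Odd (hWt (x+y) / 2 + ip (x+y) v) := by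
            rw [Nat.even_iff] at h; rw [Nat.odd_iff]; omega
          rw [h.neg_one_pow, h'.neg_one_pow]; norm_num
        · have h' : Even (hWt (x+y) / 2 + ip (x+y) v) := by
            rw [Nat.odd_iff] at h; rw [Nat.even_iff]; omega
          rw [h.neg_one_pow, h'.neg_one_pow]
    rw [Finset.sum_neg_distrib] at key
    omega

open Classical in
theorem poisson {D : Submodule (ZMod 2) (ι → ZMod 2)} (hD : SelfDual2 D)
    {A : Type*} [CommRing A] (F : (ι → ZMod 2) → A) :
    ((Finset.univ.filter fun x => x ∈ D).card : A) * ∑ v with v ∈ TT D, F v =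
      ∑ x with x ∈ D, (-1:A)^(hWt x / 2) * ∑ v, (-1)^(ip x v) * F v := by
  simp_rw [Finset.mul_sum]
  rw [Finset.sum_comm, Finset.sum_filter]
  refine Finset.sum_congr rfl fun v _ => ?_
  have := congrArg (Int.cast (R := A)) (orth hD v)
  push_cast at this
  simp_rw [← mul_assoc]
  rw [← Finset.sum_mul, this]
  split_ifs <;> simp

open Classical in
theorem gauss {D : Submodule (ZMod 2) (ι → ZMod 2)} (hD : SelfDual2 D) :
    ∑ v with v ∈ TT D, Complex.I^(hWt v) = (1 + Complex.I)^(Fintype.card ι) := by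
  have h := poisson hD (fun v => Complex.I^(hWt v))
  have h0 : ((Finset.univ.filter fun x => x ∈ D).card : ℂ) ≠ 0 := by
    rw [Nat.cast_ne_zero]; apply Finset.card_ne_zero_of_mem (a := 0); simp
  have hg : ∑ v : ι → ZMod 2, Complex.I^(hWt v) = (1 + Complex.I)^(Fintype.card ι) := by
    have := trans4 (1:ℂ) Complex.I (0 : ι → ZMod 2)
    simpa [ip, hWt_zero] using this
  apply mul_left_cancel₀ h0
  rw [h, Finset.card_eq_sum_ones, Nat.cast_sum, Finset.sum_mul]
  refine Finset.sum_congr rfl fun x hx => ?_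
  have hx : x ∈ D := by simpa using hx
  rw [← hg, Nat.cast_one, one_mul, Finset.mul_sum, ← Equiv.sum_comp (Equiv.addRight x) (fun v => Complex.I^(hWt v))]
  refine Finset.sum_congr rfl fun v _ => ?_
  have h1 := hWt_add v x
  have h2 := sd_even hD hx
  rw [ip_comm] at h1
  obtain ⟨e, he⟩ := h2
  rw [Equiv.coe_addRight, he, show (e+e)/2 = e by omega, ← Complex.I_sq, ← pow_mul, ← pow_mul]
  rw [show Complex.I^(hWt (v+x)) = Complex.I^(hWt (v+x)) * (Complex.I^4)^(ip x v) by simp [Complex.I_pow_four]]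
  rw [← pow_mul, ← pow_add, ← pow_add, ← pow_add]
  congr 1; omega

theorem TT_mod {D : Submodule (ZMod 2) (ι → ZMod 2)} (hD : SelfDual2 D) (h : ℕ)
    (hn : Fintype.card ι = 2 * h) {t : ι → ZMod 2} (ht : t ∈ TT D) : hWt t % 4 = h % 4 := by
  classical
  have hg := gauss hD
  have h1 : ∑ v with v ∈ TT D, Complex.I^(hWt v) = ∑ v : ι → ZMod 2 with v ∈ TT D, Complex.I^(hWt t) := by
    refine Finset.sum_congr rfl fun v hv => ?_
    have hv : v ∈ TT D := by simpa using hv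
    rw [Complex.I_pow_eq_pow_mod, TT_diff hD hv ht, ← Complex.I_pow_eq_pow_mod]
  rw [h1, Finset.sum_const, hn, pow_mul, show (1+Complex.I)^2 = ((2:ℝ):ℂ) * Complex.I by
    linear_combination (norm := (push_cast; ring)) Complex.I_sq, mul_pow, nsmul_eq_mul,
    Complex.I_pow_eq_pow_mod, Complex.I_pow_eq_pow_mod h, ← Complex.ofReal_pow, ← Complex.ofReal_natCast] at hg
  have hc : (0:ℝ) < ((Finset.univ.filter fun v => v ∈ TT D).card : ℝ) := by
    rw [Nat.cast_pos, Finset.card_pos]; exact ⟨t, by simpa using ht⟩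
  have hp : (0:ℝ) < 2^h := by positivity
  generalize ((Finset.univ.filter fun v => v ∈ TT D).card : ℝ) = c at *
  generalize (2:ℝ)^h = p at *
  have a1 : hWt t % 4 < 4 := Nat.mod_lt _ (by norm_num)
  have a2 : h % 4 < 4 := Nat.mod_lt _ (by norm_num)
  generalize hWt t % 4 = s at *
  generalize h % 4 = u at *
  rw [Complex.ext_iff] at hg
  interval_cases s <;> interval_cases u <;> first | rfl | (exfalso; simp [pow_succ] at hg; first | linarith | (obtain ⟨h1, h2⟩ := hg; linarith))

open Classical in
theorem core {D : Submodule (ZMod 2) (ι → ZMod 2)} (hD : SelfDual2 D) (h M : ℕ) (hh : h ≠ 0)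
    (hn : Fintype.card ι = 2 * h) (hM : 4 * M ≤ h)
    (hT : ∀ v ∈ TT D, h ≤ hWt v + 4 * M) (hx : ∀ x ∈ D, x ≠ 0 → 2 * M + 4 ≤ hWt x) :
    coeff (2*M) (geo 2 ^ (h+1) * VV^(M+1)) = 0 := by
  have hp := poisson hD (fun v => (1 + X : ℚ⟦X⟧)^(Fintype.card ι - hWt v) * (1 - X)^(hWt v))
  simp_rw [trans4] at hp
  have hg : ∃ g : ℚ⟦X⟧, ∑ x with x ∈ D, (-1:ℚ⟦X⟧)^(hWt x / 2) * ((1+X+(1-X))^(Fintype.card ι - hWt x) *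
      (1+X-(1-X))^(hWt x)) = 2^(2*h) * (1 + X^(2*M+4) * g) := by
    refine ⟨∑ x ∈ (Finset.univ.filter fun x => x ∈ D).erase 0, (-1:ℚ⟦X⟧)^(hWt x / 2) * X^(hWt x - (2*M+4)), ?_⟩
    rw [← Finset.add_sum_erase _ _ (a := 0) (by simp), mul_add, Finset.mul_sum, Finset.mul_sum]
    congr 1
    · rw [hWt_zero, hn, Nat.sub_zero]; ring
    · refine Finset.sum_congr rfl fun x hx' => ?_
      simp only [Finset.mem_erase, Finset.mem_filter, Finset.mem_univ, true_and] at hx'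
      have h1 := hx x hx'.2 hx'.1
      have h2 := hWt_le x
      rw [show (1+X+(1-X) : ℚ⟦X⟧) = 2 by ring, show (1+X-(1-X) : ℚ⟦X⟧) = 2*X by ring, mul_pow]
      have e1 : (2:ℚ⟦X⟧)^(2*h) = 2^(Fintype.card ι - hWt x) * 2^(hWt x) := by
        rw [← pow_add]; congr 1; omega
      have e2 : (X:ℚ⟦X⟧)^(hWt x) = X^(2*M+4) * X^(hWt x - (2*M+4)) := by
        rw [← pow_add]; congr 1; omega
      rw [e1, e2]; ring
  obtain ⟨g, hg⟩ := hg
  rw [hg] at hp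
  have hP : ∀ v ∈ TT D, ∃ P : Polynomial ℚ, P.natDegree ≤ M ∧
      (1 + X : ℚ⟦X⟧)^(Fintype.card ι - hWt v) * (1 - X)^(hWt v) +
      (1 + X : ℚ⟦X⟧)^(hWt v) * (1 - X)^(Fintype.card ι - hWt v) = (1 - X^2)^h * Polynomial.aeval (X^2*UU) P := by
    intro v hv
    have h1 := hT v hv
    have h2 := hT _ (TT_compl hD hv)
    rw [hWt_compl] at h2
    have h3 := TT_mod hD h hn hv
    have h4 := hWt_le v
    have hw : (1 - X^2 : ℚ⟦X⟧) = (1 - X) * (1 + X) := by ring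
    rcases le_total h (hWt v) with hle | hle
    · obtain ⟨j, hj⟩ : ∃ j, hWt v = h + 4*j := ⟨(hWt v - h)/4, by omega⟩
      obtain ⟨P, hd, hP⟩ := cheb j
      refine ⟨P, by omega, ?_⟩
      obtain ⟨d, rfl⟩ : ∃ d, h = 4*j+d := ⟨h-4*j, by omega⟩
      rw [pow_add, mul_assoc, mul_comm ((1 - X^2 : ℚ⟦X⟧)^d), ← mul_assoc, ← hP, hj,
        show Fintype.card ι - (4*j+d+4*j) = d by omega, hw]
      generalize (1 - X : ℚ⟦X⟧) = p
      generalize (1 + X : ℚ⟦X⟧) = q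
      ring
    · obtain ⟨j, hj⟩ : ∃ j, h = hWt v + 4*j := ⟨(h - hWt v)/4, by omega⟩
      obtain ⟨P, hd, hP⟩ := cheb j
      refine ⟨P, by omega, ?_⟩
      rw [hj, pow_add, mul_assoc, mul_comm ((1 - X^2 : ℚ⟦X⟧)^(hWt v)),]
      rw [mul_comm _ ((1 - X^2 : ℚ⟦X⟧)^(hWt v)), ← hP,
        show Fintype.card ι - hWt v = hWt v + 8*j by omega, hw]
      generalize (1 - X : ℚ⟦X⟧) = p
      generalize (1 + X : ℚ⟦X⟧) = q
      ring
  choose! P hPd hP using hP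
  have hs : ∑ v with v ∈ TT D, (1 + X : ℚ⟦X⟧)^(Fintype.card ι - hWt v) * (1 - X)^(hWt v) =
      ∑ v with v ∈ TT D, (1 + X : ℚ⟦X⟧)^(hWt v) * (1 - X)^(Fintype.card ι - hWt v) := by
    refine Finset.sum_nbij' (fun x => x + 1) (fun x => x + 1) ?_ ?_ ?_ ?_ ?_
    · intro x hx; simp only [Finset.mem_filter, Finset.mem_univ, true_and] at hx ⊢; exact TT_compl hD hx
    · intro x hx; simp only [Finset.mem_filter, Finset.mem_univ, true_and] at hx ⊢; exact TT_compl hD hx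
    · intro x hx; ext i; simp [add_assoc, CharTwo.add_self_eq_zero]
    · intro x hx; ext i; simp [add_assoc, CharTwo.add_self_eq_zero]
    · intro x hx
      have := hWt_le x
      rw [hWt_compl, show Fintype.card ι - (Fintype.card ι - hWt x) = hWt x by omega]
  refine ps_key UU VV (1 - X^2) (geo 2) g UV rfl (geo_mul 2 (by norm_num)) h M hh (2^(2*h+1)) (by positivity)
    (((Finset.univ.filter fun x => x ∈ D).card : Polynomial ℚ) * ∑ v with v ∈ TT D, P v) ?_ ?_
  · rw [← map_natCast Polynomial.C]
    refine (Polynomial.natDegree_C_mul_le _ _).trans (Polynomial.natDegree_sum_le_of_forall_le _ _ fun v hv => hPd v (by simpa using hv))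
  · rw [map_mul, map_natCast, map_sum, mul_left_comm, Finset.mul_sum]
    have : ∑ v with v ∈ TT D, (1 - X^2 : ℚ⟦X⟧)^h * Polynomial.aeval (X^2*UU) (P v) =
      2 * ∑ v with v ∈ TT D, (1 + X : ℚ⟦X⟧)^(Fintype.card ι - hWt v) * (1 - X)^(hWt v) := by
      rw [two_mul]; nth_rewrite 2 [hs]; rw [← Finset.sum_add_distrib]
      exact Finset.sum_congr rfl fun v hv => (hP v (by simpa using hv)).symm
    rw [this, mul_left_comm, hp, map_pow, map_ofNat]; ring

theorem shadow_eq {D : Submodule (ZMod 2) (ι → ZMod 2)} (hD : SelfDual2 D)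
    (hs : SinglyEven (D : Set (ι → ZMod 2))) : Z4Note.shadow (D : Set (ι → ZMod 2)) = TT D := by
  ext v
  simp only [Z4Note.shadow, dual2, evenSubcode, Set.mem_sdiff, Set.mem_ofPred_eq, SetLike.mem_coe, and_imp, ip_even, TT]
  constructor
  · rintro ⟨h1, h2⟩ x hx
    have hxe := sd_even hD hx
    rw [sd_mem hD] at h2
    push Not at h2
    obtain ⟨z, hz, hvz⟩ := h2
    have hze := sd_even hD hz
    have hz4 : ¬ 4 ∣ hWt z := fun h => by
      have := h1 z hz h; rw [Nat.even_iff] at this; rw [Nat.not_even_iff] at hvz; omega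
    rw [Nat.even_iff] at hxe hze
    rw [Nat.not_even_iff] at hvz
    by_cases h4 : 4 ∣ hWt x
    · have := h1 x hx h4; rw [Nat.even_iff, ip_comm] at this; omega
    · have hw := hWt_add x z
      have hxz := (sd_mem hD x).1 hx z hz
      rw [Nat.even_iff] at hxz
      have := h1 (x+z) (D.add_mem hx hz) (by omega)
      obtain ⟨r, hr⟩ := ip_add x z v
      rw [Nat.even_iff, ip_comm] at this
      rw [ip_comm z] at hr
      omega
  · intro h
    refine ⟨fun x hx h4 => ?_, fun hv => ?_⟩
    · have := h x hx; rw [Nat.even_iff, ip_comm]; omega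
    · obtain ⟨x, hx, h4⟩ := hs
      have h1 := h x hx
      have h2 := (sd_mem hD v).1 hv x hx
      rw [Nat.even_iff, ip_comm] at h2
      omega

theorem minHam_eq {S : Set (ι → ZMod 2)} {d : ℕ} (h1 : ∃ x ∈ S, x ≠ 0 ∧ hWt x = d)
    (h2 : ∀ x ∈ S, x ≠ 0 → d ≤ hWt x) : minHam S = d := by
  apply le_antisymm
  · exact Nat.sInf_le h1
  · apply le_csInf ⟨d, h1⟩
    rintro e ⟨x, hx, h0, rfl⟩; exact h2 x hx h0

/-- lift of a binary vector orthogonal to the residue code -/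
theorem lift_bound (C : Submodule (ZMod 4) (ι → ZMod 4)) (hsd : SelfDualZ4 C) (v : ι → ZMod 2) (hv0 : v ≠ 0)
    (hv : ∀ c ∈ C, Even (ip (res2 c) v)) : minLee (C : Set (ι → ZMod 4)) ≤ 2 * hWt v := by
  apply Nat.sInf_le
  refine ⟨fun i => if v i ≠ 0 then 2 else 0, ?_, ?_, ?_⟩
  · rw [hsd]
    intro y hy
    have h1 := hv y hy
    have : ∑ i, (if v i ≠ 0 then (2:ZMod 4) else 0) * y i = ((2 * ip (res2 y) v : ℕ) : ZMod 4) := by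
      simp only [ip, Finset.card_filter, Finset.mul_sum, Nat.cast_sum]
      refine Finset.sum_congr rfl fun i _ => ?_
      have key : ∀ (a : ZMod 2) (b : ZMod 4), (if a ≠ 0 then (2:ZMod 4) else 0) * b =
          ((2 * (if ZMod.castHom (by norm_num : (2:ℕ) ∣ 4) (ZMod 2) b ≠ 0 ∧ a ≠ 0 then 1 else 0) : ℕ) : ZMod 4) := by
        decide
      exact key (v i) (y i)
    rw [this, ZMod.natCast_eq_zero_iff]
    rw [Nat.even_iff] at h1; omega
  · intro h; apply hv0; ext i
    have := congrFun h i
    by_contra hne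
    simp only [Pi.zero_apply] at this hne
    rw [if_pos hne] at this
    exact absurd this (by decide)
  · simp only [leeWt, hWt, Finset.card_filter, Finset.mul_sum]
    refine Finset.sum_congr rfl fun i _ => ?_
    generalize v i = a
    revert a; decide

theorem res_de (C : Submodule (ZMod 4) (ι → ZMod 4)) (hsd : SelfDualZ4 C) (c : ι → ZMod 4) (hc : c ∈ C) :
    4 ∣ hWt (res2 c) := by
  have h1 : c ∈ (C : Set (ι → ZMod 4)) := hc
  rw [hsd] at h1
  have h2 := h1 c hc
  rw [← ZMod.natCast_eq_zero_iff, ← h2]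
  simp only [hWt, Finset.card_filter, Nat.cast_sum]
  refine Finset.sum_congr rfl fun i _ => ?_
  have key : ∀ a : ZMod 4,
      (((if ZMod.castHom (by norm_num : (2:ℕ) ∣ 4) (ZMod 2) a ≠ 0 then 1 else 0) : ℕ) : ZMod 4) = a * a := by
    decide
  exact key (c i)

theorem main (k : ℕ) (hk : 0 < k) (e b : ℕ) (hn : Fintype.card ι = 24 * k + 2 * e)
    (hab : (e, b) = (1, 2) ∨ (e, b) = (2, 4) ∨ (e, b) = (3, 4) ∨ (e, b) = (5, 4))
    (C : Submodule (ZMod 4) (ι → ZMod 4)) (hsd : SelfDualZ4 C)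
    (hlee : minLee (C : Set (ι → ZMod 4)) = 8 * k + b)
    (D : Submodule (ZMod 2) (ι → ZMod 2)) (hD : SelfDual2 D)
    (hres : residue (C : Set (ι → ZMod 4)) ⊆ (D : Set (ι → ZMod 2))) :
    SExtremal D ∧ minHam (D : Set (ι → ZMod 2)) = 4 * k + 2 := by
  simp only [Prod.mk.injEq] at hab
  have hcD : ∀ c ∈ C, res2 c ∈ D := fun c hc => hres ⟨c, hc, rfl⟩
  have hn' : Fintype.card ι = 2 * (12 * k + e) := by omega
  have hTm : ∀ v ∈ TT D, hWt v % 4 = (12*k+e) % 4 := fun v hv => TT_mod hD _ hn' hv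
  have hTn0 : ∀ v ∈ TT D, v ≠ 0 := by
    rintro v hv rfl
    have := hTm _ hv; rw [hWt_zero] at this; omega
  have hTlow : ∀ v ∈ TT D, 4 * k + e ≤ hWt v := by
    intro v hv
    have h1 := lift_bound C hsd v (hTn0 v hv) (fun c hc => by
      have h1 := hv _ (hcD c hc)
      have h2 := res_de C hsd c hc
      rw [Nat.even_iff]; omega)
    have := hTm v hv
    omega
  have hDlow : ∀ x ∈ D, x ≠ 0 → 4 * k + 2 ≤ hWt x := by
    intro x hx h0
    have h1 := lift_bound C hsd x h0 (fun c hc => (sd_mem hD _).1 (hcD c hc) x hx)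
    have := sd_even hD hx
    rw [Nat.even_iff] at this
    omega
  have hDex : ∃ x ∈ D, x ≠ 0 ∧ hWt x = 4 * k + 2 := by
    by_contra! hne
    refine cB k e (by omega) (by omega) (core hD (12*k+e) (2*k) (by omega) hn' (by omega) ?_ ?_)
    · intro v hv; have := hTlow v hv; omega
    · intro x hx h0
      have h1 := hDlow x hx h0
      have h2 := hne x hx h0
      have := sd_even hD hx
      rw [Nat.even_iff] at this
      omega
  have hTex : ∃ v ∈ TT D, v ≠ 0 ∧ hWt v = 4 * k + e := by
    by_contra! hne
    refine cA k e hk (core hD (12*k+e) (2*k-1) (by omega) hn' (by omega) ?_ ?_)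
    · intro v hv
      have h1 := hTlow v hv
      have h2 := hne v hv (hTn0 v hv)
      have h3 := hTm v hv
      omega
    · intro x hx h0
      have h1 := hDlow x hx h0
      omega
  have hsing : SinglyEven (D : Set (ι → ZMod 2)) := by
    by_contra hne
    simp only [SinglyEven, not_exists, not_and, not_not] at hne
    refine hTn0 0 (fun x hx => ?_) rfl
    have := hne x hx
    simpa [ip] using this
  have hmin : minHam (D : Set (ι → ZMod 2)) = 4 * k + 2 := minHam_eq hDex hDlow
  have hminS : minHam (Z4Note.shadow (D : Set (ι → ZMod 2))) = 4 * k + e := by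
    rw [shadow_eq hD hsing]; exact minHam_eq hTex (fun v hv _ => hTlow v hv)
  refine ⟨⟨hD, hsing, fun _ => ?_, fun h => ?_⟩, hmin⟩
  · rw [hmin, hminS]; omega
  · omega

end comb
end Z4Aux

open Z4Note in
/-- for `(α,β) ∈ {(2,2),(4,4),(6,4),(10,4)}`, any binary self-dual code
containing the residue code of a self-dual `ZMod 4`-code of length `24k+α` and minimum
Lee weight `8k+β` is s-extremal with minimum weight `4k+2`. -/
theorem sextremal_of_residue_subset_case1
    (k : ℕ) (hk : 0 < k) (a b : ℕ)
    (hab : (a, b) = (2, 2) ∨ (a, b) = (4, 4) ∨ (a, b) = (6, 4) ∨ (a, b) = (10, 4))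
    (C : Submodule (ZMod 4) (Fin (24 * k + a) → ZMod 4))
    (hsd : SelfDualZ4 C)
    (hlee : minLee (C : Set (Fin (24 * k + a) → ZMod 4)) = 8 * k + b) :
    ∀ D : Submodule (ZMod 2) (Fin (24 * k + a) → ZMod 2),
      SelfDual2 D →
      residue (C : Set (Fin (24 * k + a) → ZMod 4)) ⊆ (D : Set (Fin (24 * k + a) → ZMod 2)) →
      SExtremal D ∧ minHam (D : Set (Fin (24 * k + a) → ZMod 2)) = 4 * k + 2 := by
  intro D hD hres
  rcases hab with h | h | h | h <;> rw [Prod.mk.injEq] at h <;> obtain ⟨rfl, rfl⟩ := h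
  · exact Z4Aux.main k hk 1 2 (by simp) (by simp) C hsd hlee D hD hres
  · exact Z4Aux.main k hk 2 4 (by simp) (by simp) C hsd hlee D hD hres
  · exact Z4Aux.main k hk 3 4 (by simp) (by simp) C hsd hlee D hD hres
  · exact Z4Aux.main k hk 5 4 (by simp) (by simp) C hsd hlee D hD hres
end

section
/- Let k be a positive integer, let (α,β) be one of (14,6), (18,8), (20,8), and let C be a self-dual Z4-code of length 24k+α with minimum Lee weight 8k+β. Then every binary self-dual code containing the residue code C^(1) is an s-extremal self-dual code with minimum Hamming weight 4k+4. -/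
open Finset

namespace Lag
open PowerSeries
noncomputable def G : PowerSeries ℝ := PowerSeries.mk fun _ => 1
noncomputable def E : PowerSeries ℝ := PowerSeries.mk fun j => (-1)^j

lemma gG : (1 - X) * G = 1 := by
  rw [mul_comm]; exact PowerSeries.mk_one_mul_one_sub_eq_one ℝ

lemma eE : (1 + X) * E = 1 := by
  ext j
  cases j with
  | zero => simp [E, add_mul]
  | succ j => simp [E, add_mul, coeff_succ_X_mul, pow_succ, coeff_one]

lemma dG : d⁄dX ℝ G = G ^ 2 := by
  have h := congrArg (d⁄dX ℝ) gG
  simp only [Derivation.leibniz, map_sub, smul_eq_mul, derivative_X, Derivation.map_one_eq_zero] at h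
  have h2 : G * ((1 - X) * d⁄dX ℝ G) = G * G := by
    congr 1
    linear_combination h
  rw [← mul_assoc, mul_comm G, gG] at h2
  rw [sq, ← h2, one_mul]

lemma coeff_euler (j : ℕ) (v : PowerSeries ℝ) :
    coeff j (X * d⁄dX ℝ v - (j : PowerSeries ℝ) * v) = 0 := by
  have : (j : PowerSeries ℝ) = PowerSeries.C (j:ℝ) := by simp
  rw [map_sub, this, coeff_C_mul]
  cases j with
  | zero => simp
  | succ j => rw [coeff_succ_X_mul, coeff_derivative]; push_cast; ring

/-- vanishing residue -/
lemma coeff_zero_term (j : ℕ) (hj : 1 ≤ j) :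
    coeff j ((1 - 6 * X + X ^ 2) * (1 + X) ^ (4 * j - 1) * G ^ (2 * j + 1) : PowerSeries ℝ) = 0 := by
  have h := coeff_euler j ((1 + X) ^ (4 * j) * G ^ (2 * j))
  have key : X * d⁄dX ℝ ((1 + X) ^ (4 * j) * G ^ (2 * j)) - (j : PowerSeries ℝ) * ((1 + X) ^ (4 * j) * G ^ (2 * j))
      = PowerSeries.C (-(j:ℝ)) * ((1 - 6 * X + X ^ 2) * (1 + X) ^ (4 * j - 1) * G ^ (2 * j + 1) : PowerSeries ℝ) := by
    obtain ⟨i, rfl⟩ : ∃ i, j = i + 1 := ⟨j - 1, by omega⟩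
    rw [Derivation.leibniz, derivative_pow, derivative_pow, dG]
    have e1 : 4 * (i + 1) - 1 = 4 * i + 3 := by omega
    have e2 : 2 * (i + 1) - 1 = 2 * i + 1 := by omega
    simp only [e1, e2, map_add, derivative_X, Derivation.map_one_eq_zero, smul_eq_mul, map_neg]
    have : PowerSeries.C ((i + 1 : ℕ) : ℝ) = (i : PowerSeries ℝ) + 1 := by simp
    rw [this]
    push_cast
    have e3 : 4 * (i+1) = 4 * i + 3 + 1 := by ring
    have e4 : 2 * (i+1) = 2 * i + 1 + 1 := by ring
    rw [e3, e4, pow_succ (1+X) (4*i+3), pow_succ G (2*i+1+1), pow_succ G (2*i+1)]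
    generalize (1 + X : PowerSeries ℝ) ^ (4 * i + 3) = P
    generalize G ^ (2 * i + 1) = Q
    linear_combination ((i:PowerSeries ℝ) + 1) * P * Q * G * (1 - 3 * X) * gG
  rw [key, coeff_C_mul] at h
  have : (-(j:ℝ)) ≠ 0 := by
    have : (0:ℝ) < j := by exact_mod_cast hj
    linarith
  exact (mul_eq_zero.mp h).resolve_left this

lemma L_term (N i : ℕ) (h : 4 * (i + 1) ≤ N) :
    (N : PowerSeries ℝ) * ((1 + X) ^ (N - 4 * (i + 1)) * (X * (1 - X) ^ 2) ^ (i + 1))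
      - (1 + X) * d⁄dX ℝ ((1 + X) ^ (N - 4 * (i + 1)) * (X * (1 - X) ^ 2) ^ (i + 1))
    = X ^ i * (PowerSeries.C (-((i:ℝ) + 1)) * ((1 - 6 * X + X ^ 2) * (1 + X) ^ (N - 4 * (i + 1)) * (1 - X) ^ (2 * i + 1))) := by
  obtain ⟨M, rfl⟩ : ∃ M, N = M + 4 * (i + 1) := ⟨N - 4 * (i + 1), by omega⟩
  have e1 : M + 4 * (i + 1) - 4 * (i + 1) = M := by omega
  rw [e1]
  have hC : PowerSeries.C (-((i:ℝ) + 1)) = -((i : PowerSeries ℝ) + 1) := by simp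
  have hM : (1 + X) * d⁄dX ℝ ((1 + X) ^ M : PowerSeries ℝ) = (M : PowerSeries ℝ) * (1 + X) ^ M := by
    rw [derivative_pow]
    cases M with
    | zero => simp
    | succ M =>
      simp only [map_add, derivative_X, Derivation.map_one_eq_zero]
      rw [Nat.add_sub_cancel]; push_cast; ring
  rw [Derivation.leibniz, hC, smul_eq_mul, smul_eq_mul, mul_add (1 + X)]
  have hM2 : (1 + X) * ((X * (1 - X) ^ 2) ^ (i + 1) * d⁄dX ℝ ((1 + X) ^ M : PowerSeries ℝ))
     = (X * (1 - X) ^ 2) ^ (i + 1) * ((M : PowerSeries ℝ) * (1 + X) ^ M) := by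
    rw [← hM]; ring
  rw [hM2]
  simp only [smul_eq_mul, Derivation.leibniz, derivative_pow, map_sub, derivative_X,
    Derivation.map_one_eq_zero, Nat.add_sub_cancel]
  push_cast
  simp only [mul_pow, ← pow_mul, pow_succ, pow_zero]
  ring

lemma lagrange (N m : ℕ) (hm : 1 ≤ m) (hN : 4 * m ≤ N + 1) (a : ℕ → ℝ) (V : PowerSeries ℝ)
    (hV : V = ∑ i ∈ Finset.range m, PowerSeries.C (a i) * ((1 + X) ^ (N - 4 * i) * (X * (1 - X) ^ 2) ^ i))
    (h0 : coeff 0 V = 1) (hj : ∀ j, 1 ≤ j → j ≤ m → coeff j V = 0) :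
    coeff (m - 1) (E ^ (N + 1 - 4 * m) * G ^ (2 * m)) = 0 := by
  set U := E ^ (N + 1 - 4 * m) * G ^ (2 * m) with hU
  set W : PowerSeries ℝ := (N : PowerSeries ℝ) * V - (1 + X) * d⁄dX ℝ V with hW
  have hNC : (N : PowerSeries ℝ) = PowerSeries.C (N : ℝ) := by simp
  have h1 : X ^ m ∣ W - (N : PowerSeries ℝ) := by
    rw [X_pow_dvd_iff]
    intro j hjm
    have hc : coeff j W = N * coeff j V - coeff (j+1) V * (j + 1) - j * coeff j V := by
      rw [hW, map_sub, hNC, coeff_C_mul, add_mul, map_add, one_mul, coeff_derivative]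
      cases j with
      | zero => simp
      | succ j => rw [coeff_succ_X_mul, coeff_derivative]; push_cast; ring
    rw [map_sub, hc, hj (j+1) (by omega) (by omega), hNC, coeff_C]
    cases j with
    | zero => simp [h0]
    | succ j => rw [hj (j+1) (by omega) (by omega)]; simp
  obtain ⟨R, hR⟩ := h1
  have h2 : coeff (m-1) (W * U) = N * coeff (m-1) U := by
    have : W * U = (N : PowerSeries ℝ) * U + X ^ m * (R * U) := by
      rw [← mul_assoc (X ^ m), ← hR]; ring
    rw [this, map_add, hNC, coeff_C_mul, coeff_X_pow_mul', if_neg (by omega), add_zero]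
  have h3 : coeff (m-1) (W * U) = 0 := by
    have : W * U = ∑ i ∈ Finset.range m, PowerSeries.C (a i) * (((N : PowerSeries ℝ) * ((1 + X) ^ (N - 4 * i) * (X * (1 - X) ^ 2) ^ i)
      - (1 + X) * d⁄dX ℝ ((1 + X) ^ (N - 4 * i) * (X * (1 - X) ^ 2) ^ i)) * U) := by
      rw [hW, hV, map_sum, Finset.mul_sum, Finset.mul_sum, ← Finset.sum_sub_distrib, Finset.sum_mul]
      refine Finset.sum_congr rfl fun i _ => ?_
      rw [Derivation.leibniz, derivative_C]
      simp only [smul_eq_mul]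
      ring
    rw [this, map_sum]
    refine Finset.sum_eq_zero fun i hi => ?_
    rw [Finset.mem_range] at hi
    rw [coeff_C_mul]
    cases i with
    | zero =>
      have : (N : PowerSeries ℝ) * ((1 + X) ^ (N - 4 * 0) * (X * (1 - X) ^ 2) ^ 0)
          - (1 + X) * d⁄dX ℝ ((1 + X) ^ (N - 4 * 0) * (X * (1 - X) ^ 2) ^ 0) = 0 := by
        simp only [pow_zero, mul_one, mul_zero, Nat.sub_zero, derivative_pow]
        cases N with
        | zero => simp
        | succ M =>
          simp only [map_add, derivative_X, Derivation.map_one_eq_zero]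
          rw [Nat.add_sub_cancel]; push_cast; ring
      rw [this]; simp
    | succ i =>
      rw [L_term N i (by omega)]
      obtain ⟨j, rfl⟩ : ∃ j, m = i + 1 + j := ⟨m - (i+1), by omega⟩
      have hj1 : 1 ≤ j := by omega
      have : X ^ i * (PowerSeries.C (-((i:ℝ) + 1)) * ((1 - 6 * X + X ^ 2) * (1 + X) ^ (N - 4 * (i + 1)) * (1 - X) ^ (2 * i + 1))) * U
        = PowerSeries.C (-((i:ℝ) + 1)) * (X ^ i * ((1 - 6 * X + X ^ 2) * (1 + X) ^ (4 * j - 1) * G ^ (2 * j + 1))) := by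
        rw [hU]
        have e1 : N - 4 * (i + 1) = (4 * j - 1) + (N + 1 - 4 * (i + 1 + j)) := by omega
        have e2 : 2 * (i + 1 + j) = (2 * i + 1) + (2 * j + 1) := by omega
        rw [e1, e2, pow_add (1+X), pow_add G]
        have f1 : (1 + X) ^ (N + 1 - 4 * (i + 1 + j)) * E ^ (N + 1 - 4 * (i + 1 + j)) = 1 := by
          rw [← mul_pow, eE, one_pow]
        have f2 : (1 - X) ^ (2 * i + 1) * G ^ (2 * i + 1) = 1 := by
          rw [← mul_pow, gG, one_pow]
        generalize (1 + X : PowerSeries ℝ) ^ (N + 1 - 4 * (i + 1 + j)) = A at *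
        generalize E ^ (N + 1 - 4 * (i + 1 + j)) = A' at *
        generalize (1 - X : PowerSeries ℝ) ^ (2 * i + 1) = B at *
        generalize G ^ (2 * i + 1) = B' at *
        generalize PowerSeries.C (-((i:ℝ) + 1)) = c
        generalize (1 + X : PowerSeries ℝ) ^ (4 * j - 1) = P
        generalize G ^ (2 * j + 1) = Q
        calc _ = (A * A') * (B * B') * (c * (X ^ i * ((1 - 6 * X + X ^ 2) * P * Q))) := by ring
          _ = _ := by rw [f1, f2]; ring
      rw [this, coeff_C_mul, coeff_X_pow_mul', if_pos (by omega), show i + 1 + j - 1 - i = j by omega,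
        coeff_zero_term j hj1, mul_zero, mul_zero]
  have hNpos : (N : ℝ) ≠ 0 := by
    have : N ≠ 0 := by omega
    exact_mod_cast this
  exact (mul_eq_zero.mp (h2.symm.trans h3)).resolve_left hNpos

/-- even series with nonneg coefficients -/
def Ev (F : PowerSeries ℝ) : Prop := ∀ j, (Even j → 0 ≤ coeff j F) ∧ (¬ Even j → coeff j F = 0)

lemma Ev.nonneg {F} (h : Ev F) (j : ℕ) : 0 ≤ coeff j F := by
  by_cases e : Even j
  · exact (h j).1 e
  · exact ((h j).2 e).ge

lemma Ev.mul {F H} (hF : Ev F) (hH : Ev H) : Ev (F * H) := by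
  intro j
  rw [coeff_mul]
  refine ⟨fun _ => Finset.sum_nonneg fun p _ => mul_nonneg (hF.nonneg _) (hH.nonneg _), fun hj => ?_⟩
  refine Finset.sum_eq_zero fun p hp => ?_
  rw [Finset.HasAntidiagonal.mem_antidiagonal] at hp
  by_cases e : Even p.1
  · rw [(hH p.2).2, mul_zero]
    intro e2; exact hj (hp ▸ e.add e2)
  · rw [(hF p.1).2 e, zero_mul]

lemma coeff_mul_ge {F H : PowerSeries ℝ} (hF : ∀ j, 0 ≤ coeff j F) (hH : ∀ j, 0 ≤ coeff j H) (j : ℕ) :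
    coeff 0 F * coeff j H ≤ coeff j (F * H) := by
  rw [coeff_mul]
  exact Finset.single_le_sum (f := fun p : ℕ × ℕ => coeff p.1 F * coeff p.2 H)
    (fun p _ => mul_nonneg (hF _) (hH _)) (a := (0, j)) (by simp)

noncomputable def H : PowerSeries ℝ := E * G

lemma H_coeff (j : ℕ) : coeff j H = if Even j then 1 else 0 := by
  have h : (PowerSeries.mk fun j => if Even j then (1:ℝ) else 0) = H := by
    have h1 : (1 - X ^ 2) * (PowerSeries.mk fun j => if Even j then (1:ℝ) else 0) = 1 := by
      ext j
      rw [sub_mul, one_mul, map_sub, coeff_X_pow_mul']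
      match j with
      | 0 => simp
      | 1 => simp [coeff_one]
      | j + 2 => simp [coeff_one, Nat.even_add]
    calc _ = (((1 + X) * E) * ((1 - X) * G)) * (PowerSeries.mk fun j => if Even j then (1:ℝ) else 0) := by
          rw [eE, gG, one_mul, one_mul]
      _ = ((1 - X ^ 2) * (PowerSeries.mk fun j => if Even j then (1:ℝ) else 0)) * (E * G) := by ring
      _ = H := by rw [h1, one_mul, H]
  rw [← h, coeff_mk]

lemma H_ev : Ev H := by
  intro j
  rw [H_coeff]
  constructor <;> intro h <;> simp [h]

lemma Hpow (K : ℕ) : Ev (H ^ (K + 1)) ∧ ∀ j, Even j → 1 ≤ coeff j (H ^ (K+1)) := by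
  induction K with
  | zero => 
    rw [zero_add, pow_one]
    refine ⟨H_ev, fun j hj => ?_⟩
    rw [H_coeff, if_pos hj]
  | succ K ih =>
    rw [pow_succ']
    refine ⟨H_ev.mul ih.1, fun j hj => ?_⟩
    have := coeff_mul_ge H_ev.nonneg ih.1.nonneg j
    rw [H_coeff] at this
    have h2 := ih.2 j hj
    simp at this
    linarith

lemma Gpow (r : ℕ) : ∀ j, 1 ≤ coeff j (G ^ (r+1)) := by
  induction r with
  | zero => intro j; simp [G]
  | succ r ih =>
    intro j
    rw [pow_succ']
    have := coeff_mul_ge (F := G) (H := G ^ (r+1)) (fun j => by simp [G]) (fun j => by linarith [ih j]) j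
    have h2 := ih j
    simp only [G, coeff_mk, one_mul] at this h2 ⊢
    linarith

lemma pos1 (K r j : ℕ) : coeff j (E ^ (K+1) * G ^ (K + 1 + (r + 1))) ≠ 0 := by
  rw [pow_add G (K + 1), ← mul_assoc, ← mul_pow]
  have h := Hpow K
  have := coeff_mul_ge h.1.nonneg (H := G ^ (r+1)) (fun j => by linarith [Gpow r j]) j
  have h1 := h.2 0 (by simp)
  have h2 := Gpow r j
  rw [H] at *
  have : 1 ≤ coeff j ((E * G) ^ (K + 1) * G ^ (r + 1)) := by nlinarith
  linarith

lemma pos2 (K j : ℕ) (hj : Even j) (A B : PowerSeries ℝ) (hA : Ev A) (hA0 : 1 ≤ coeff 0 A) (hB : Ev B) (r : ℕ)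
    (h : (1 - X) ^ r = A - X * B) : coeff j (E ^ (K + 1 + r) * G ^ (K + 1)) ≠ 0 := by
  have e : E ^ (K + 1 + r) * G ^ (K + 1) = A * H ^ (K + 1 + r) - X * (B * H ^ (K + 1 + r)) := by
    rw [← mul_assoc, ← sub_mul, ← h, H, mul_pow, pow_add G (K + 1)]
    have : (1 - X) ^ r * G ^ r = 1 := by rw [← mul_pow, gG, one_pow]
    calc _ = E ^ (K + 1 + r) * G ^ (K + 1) * ((1 - X) ^ r * G ^ r) := by rw [this, mul_one]
      _ = _ := by ring
  have hp := Hpow (K + r)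
  rw [show K + r + 1 = K + 1 + r by ring] at hp
  rw [e, map_sub]
  have h1 : 1 ≤ coeff j (A * H ^ (K + 1 + r)) := by
    have := coeff_mul_ge hA.nonneg hp.1.nonneg j
    have := hp.2 j hj
    nlinarith
  have h2 : coeff j (X * (B * H ^ (K + 1 + r))) = 0 := by
    cases j with
    | zero => simp
    | succ j =>
      rw [coeff_succ_X_mul]
      refine ((hB.mul hp.1) j).2 ?_
      rw [Nat.even_add_one] at hj
      exact hj
  rw [h2]; linarith

lemma ev_poly (a b c : ℝ) (ha : 0 ≤ a) (hb : 0 ≤ b) (hc : 0 ≤ c) :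
    Ev (PowerSeries.C a + PowerSeries.C b * X ^ 2 + PowerSeries.C c * X ^ 4) := by
  intro j
  simp only [map_add, coeff_C, coeff_C_mul, coeff_X_pow]
  constructor
  · intro _; positivity
  · intro h
    have h0 : j ≠ 0 := by rintro rfl; simp at h
    have h2 : j ≠ 2 := by rintro rfl; exact h (by decide)
    have h4 : j ≠ 4 := by rintro rfl; exact h (by decide)
    simp [h0, h2, h4]

lemma hC2 : (PowerSeries.C (2:ℝ)) = 2 := map_ofNat _ 2
lemma hC4 : (PowerSeries.C (4:ℝ)) = 4 := map_ofNat _ 4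
lemma hC5 : (PowerSeries.C (5:ℝ)) = 5 := map_ofNat _ 5
lemma hC6 : (PowerSeries.C (6:ℝ)) = 6 := map_ofNat _ 6
lemma hC10 : (PowerSeries.C (10:ℝ)) = 10 := map_ofNat _ 10
lemma pos_two (K j : ℕ) (hj : Even j) : coeff j (E ^ (K + 1 + 2) * G ^ (K + 1)) ≠ 0 := by
  refine pos2 K j hj _ _ (ev_poly 1 1 0 ?_ ?_ ?_) ?_ (ev_poly 2 0 0 ?_ ?_ ?_) 2 ?_ <;> try norm_num
  simp only [hC2, hC4, hC5, hC6, hC10]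
  ring
lemma pos_four (K j : ℕ) (hj : Even j) : coeff j (E ^ (K + 1 + 4) * G ^ (K + 1)) ≠ 0 := by
  refine pos2 K j hj _ _ (ev_poly 1 6 1 ?_ ?_ ?_) ?_ (ev_poly 4 4 0 ?_ ?_ ?_) 4 ?_ <;> try norm_num
  simp only [hC2, hC4, hC5, hC6, hC10]
  ring
lemma pos_five (K j : ℕ) (hj : Even j) : coeff j (E ^ (K + 1 + 5) * G ^ (K + 1)) ≠ 0 := by
  refine pos2 K j hj _ _ (ev_poly 1 10 5 ?_ ?_ ?_) ?_ (ev_poly 5 10 1 ?_ ?_ ?_) 5 ?_ <;> try norm_num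
  simp only [hC2, hC4, hC5, hC6, hC10]
  ring
end Lag
namespace Gle
open Polynomial

noncomputable def T (N : ℕ) (p : ℝ[X]) : ℝ[X] :=
  ∑ j ∈ Finset.range (2 * N + 1), C (p.coeff j) * ((1 - X) ^ j * (1 + X) ^ (2 * N - j))

lemma eq_of_gt_one (p q : ℝ[X]) (h : ∀ y : ℝ, 1 < y → p.eval y = q.eval y) : p = q :=
  Polynomial.eq_of_infinite_eval_eq p q ((Set.Ioi_infinite (1:ℝ)).mono fun y hy => h y hy)

lemma T_eval (N : ℕ) (p : ℝ[X]) (hp : p.natDegree ≤ 2 * N) (y : ℝ) (hy : 1 + y ≠ 0) :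
    (T N p).eval y = (1 + y) ^ (2 * N) * p.eval ((1 - y) / (1 + y)) := by
  rw [T, eval_finsetSum, Polynomial.eval_eq_sum_range' (n := 2 * N + 1) (by omega), Finset.mul_sum]
  refine Finset.sum_congr rfl fun j hj => ?_
  rw [Finset.mem_range] at hj
  simp only [eval_mul, eval_C, eval_pow, eval_sub, eval_add, eval_one, eval_X]
  obtain ⟨r, hr⟩ : ∃ r, 2 * N = j + r := ⟨2 * N - j, by omega⟩
  rw [hr, Nat.add_sub_cancel_left, pow_add, div_pow]
  field_simp

def Inv (N : ℕ) (p : ℝ[X]) : Prop :=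
  p.natDegree ≤ 2 * N ∧ p.comp (-X) = p ∧
    ∀ y : ℝ, 1 < y → (1 + y) ^ (2 * N) * p.eval ((1 - y) / (1 + y)) = 2 ^ N * p.eval y

lemma Inv.T {N p} (h : Inv N p) : T N p = C (2 ^ N) * p := by
  refine eq_of_gt_one _ _ fun y hy => ?_
  rw [T_eval N p h.1 y (by linarith), h.2.2 y hy, eval_mul, eval_C]

lemma Inv.odd {N p} (h : Inv N p) (j : ℕ) (hj : Odd j) : p.coeff j = 0 := by
  have h1 := congrArg (fun q => q.coeff j) h.2.1
  have : (-X : ℝ[X]) = C (-1) * X := by simp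
  simp only [this, comp_C_mul_X_coeff, hj.neg_one_pow] at h1
  linarith

lemma Inv.base (N : ℕ) (c : ℝ) : Inv N (C c * (1 + X ^ 2) ^ N) := by
  refine ⟨?_, ?_, ?_⟩
  · compute_degree
    omega
  · simp
  · intro y hy
    have : (1 + y) ≠ 0 := by linarith
    simp only [eval_mul, eval_C, eval_pow, eval_add, eval_one, eval_X]
    rw [pow_mul, mul_left_comm, ← mul_pow, mul_left_comm, ← mul_pow]
    congr 2
    field_simp
    ring

lemma Inv.sub {N p q} (hp : Inv N p) (hq : Inv N q) : Inv N (p - q) := by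
  refine ⟨?_, ?_, ?_⟩
  · exact (natDegree_sub_le _ _).trans (max_le hp.1 hq.1)
  · rw [sub_comp, hp.2.1, hq.2.1]
  · intro y hy
    rw [eval_sub, eval_sub, mul_sub, mul_sub, hp.2.2 y hy, hq.2.2 y hy]

noncomputable def psi : ℝ[X] := X ^ 2 * (1 - X ^ 2) ^ 2

lemma psi_ne : psi ≠ 0 := by
  intro h
  have := congrArg (eval (2:ℝ)) h
  simp [psi] at this
  norm_num at this

lemma psi_deg : psi.natDegree = 6 := by
  have : psi = X ^ 6 - 2 * X ^ 4 + X ^ 2 := by rw [psi]; ring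
  rw [this]
  compute_degree!

lemma step {N q} (h : Inv N q) (h0 : q.coeff 0 = 0) :
    q.natDegree ≤ 2 * N - 2 ∧ psi ∣ q := by
  have h2 : X ^ 2 ∣ q := by
    rw [X_pow_dvd_iff]
    intro d hd
    interval_cases d
    · exact h0
    · exact h.odd 1 (by decide)
  have hC : IsUnit (C ((2:ℝ) ^ N)) := by
    rw [Polynomial.isUnit_C]; exact (by positivity : (2:ℝ) ^ N ≠ 0).isUnit
  have h3 : (1 - X) ^ 2 ∣ q := by
    have : (1 - X) ^ 2 ∣ T N q := by
      refine Finset.dvd_sum fun j hj => ?_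
      match j with
      | 0 => simp [h0]
      | 1 => simp [h.odd 1 (by decide)]
      | j + 2 =>
        refine Dvd.dvd.mul_left (Dvd.dvd.mul_right ?_ _) _
        exact pow_dvd_pow _ (by omega)
    rw [h.T] at this
    exact (hC.dvd_mul_left).mp this
  have h4 : (1 + X) ^ 2 ∣ q := by
    have h5 : (1 - X) ^ 2 ∣ q.comp (-X) := by rw [h.2.1]; exact h3
    rw [dvd_comp_neg_X_iff] at h5
    simpa using h5
  have c1 : IsCoprime (X : ℝ[X]) (1 - X) := ⟨1, 1, by ring⟩
  have c2 : IsCoprime (X : ℝ[X]) (1 + X) := ⟨-1, 1, by ring⟩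
  have c3 : IsCoprime (1 - X : ℝ[X]) (1 + X) := ⟨C (1/2), C (1/2), by
    rw [← mul_add, show (1 - X + (1 + X) : ℝ[X]) = C 2 by rw [map_ofNat]; ring, ← C_mul]; norm_num⟩
  have h6 : psi ∣ q := by
    have d1 := (c3.pow (m := 2) (n := 2)).mul_dvd h3 h4
    have d2 := (IsCoprime.mul_right (c1.pow (m := 2) (n := 2)) (c2.pow (m := 2) (n := 2))).mul_dvd h2 d1
    have : psi = X ^ 2 * ((1 - X) ^ 2 * (1 + X) ^ 2) := by rw [psi]; ring
    rwa [this]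
  refine ⟨?_, h6⟩
  have e1 : q.eval (-1) = 0 := by
    obtain ⟨r, rfl⟩ := h4
    simp
  have e2 : q.coeff (2 * N) = 0 := by
    have := congrArg (eval (-1 : ℝ)) h.T
    rw [eval_mul, e1, mul_zero, T, eval_finsetSum, Finset.sum_range_succ, Finset.sum_eq_zero] at this
    · simp only [Nat.sub_self, pow_zero, mul_one, zero_add, eval_mul, eval_C, eval_pow, eval_sub, eval_one, eval_X] at this
      norm_num at this
      exact this
    · intro j hj
      rw [Finset.mem_range] at hj
      have : 2 * N - j ≠ 0 := by omega
      simp [this]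
  rw [natDegree_le_iff_coeff_eq_zero]
  intro j hj
  by_cases hj2 : 2 * N < j
  · exact coeff_eq_zero_of_natDegree_lt (by have := h.1; omega)
  · by_cases hj3 : j = 2 * N
    · rw [hj3, e2]
    · exact h.odd j ⟨N - 1, by omega⟩

theorem gleason (N : ℕ) : ∀ p, Inv N p → ∃ a : ℕ → ℝ,
    p = ∑ i ∈ Finset.range (N / 4 + 1), C (a i) * ((1 + X ^ 2) ^ (N - 4 * i) * psi ^ i) := by
  induction N using Nat.strong_induction_on with
  | _ N ih =>
  intro p hp
  have hq := hp.sub (Inv.base N (p.coeff 0))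
  have hq0 : (p - C (p.coeff 0) * (1 + X ^ 2) ^ N).coeff 0 = 0 := by
    simp [coeff_zero_eq_eval_zero]
  obtain ⟨hd, r, hr⟩ := step hq hq0
  rw [hr] at hd hq
  by_cases hr0 : r = 0
  · refine ⟨fun i => if i = 0 then p.coeff 0 else 0, ?_⟩
    rw [Finset.sum_eq_single 0]
    · simp
      rw [hr0, mul_zero, sub_eq_zero] at hr
      exact hr
    · intro i _ hi; simp [hi]
    · simp
  rw [natDegree_mul psi_ne hr0, psi_deg] at hd
  have hN : 4 ≤ N := by omega
  have hinv : Inv (N - 4) r := by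
    refine ⟨by omega, ?_, ?_⟩
    · have := hq.2.1
      rw [mul_comp, show psi.comp (-X) = psi by simp [psi]] at this
      exact mul_left_cancel₀ psi_ne this
    · intro y hy
      have h1 := hq.2.2 y hy
      obtain ⟨M, rfl⟩ : ∃ M, N = M + 4 := ⟨N - 4, by omega⟩
      rw [Nat.add_sub_cancel]
      rw [eval_mul, eval_mul] at h1
      have e1 : psi.eval ((1 - y) / (1 + y)) * (1 + y) ^ 8 = 2 ^ 4 * psi.eval y := by
        have : (1 + y) ≠ 0 := by linarith
        simp only [psi, eval_mul, eval_pow, eval_sub, eval_one, eval_X]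
        field_simp
        ring
      have e2 : psi.eval y ≠ 0 := by
        simp only [psi, eval_mul, eval_pow, eval_sub, eval_one, eval_X]
        have : 1 - y ^ 2 ≠ 0 := by nlinarith
        have : y ≠ 0 := by linarith
        positivity
      rw [show 2 * (M + 4) = 2 * M + 8 by ring, pow_add, pow_add] at h1
      have h2 : (2 ^ 4 * psi.eval y) * ((1 + y) ^ (2 * M) * eval ((1 - y) / (1 + y)) r)
          = (2 ^ 4 * psi.eval y) * (2 ^ M * eval y r) := by
        rw [← e1]
        rw [show psi.eval ((1 - y) / (1 + y)) * (1 + y) ^ 8 * (2 ^ M * eval y r) = (2 ^ 4 * psi.eval y) * (2 ^ M * eval y r) by rw [e1]]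
        linear_combination h1
      exact mul_left_cancel₀ (by positivity) h2
  obtain ⟨a, ha⟩ := ih (N - 4) (by omega) r hinv
  refine ⟨fun i => if i = 0 then p.coeff 0 else a (i - 1), ?_⟩
  rw [show N / 4 + 1 = ((N - 4) / 4 + 1) + 1 by omega, Finset.sum_range_succ']
  have : p = psi * r + C (p.coeff 0) * (1 + X ^ 2) ^ N := by rw [← hr]; ring
  nth_rw 1 [this]
  rw [ha, Finset.mul_sum]
  refine congrArg₂ (fun u v : ℝ[X] => u + v) ?_ ?_
  · refine Finset.sum_congr rfl fun i _ => ?_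
    beta_reduce
    rw [if_neg (by omega), Nat.add_sub_cancel, show N - 4 * (i + 1) = N - 4 - 4 * i by omega, pow_succ]
    ring
  · simp
end Gle

namespace Z4Note
namespace Aux
open Finset

variable {ι : Type*} [Fintype ι]

def sg (a : ZMod 2) : ℝ := if a = 0 then 1 else -1

lemma zmod2_cases (a : ZMod 2) : a = 0 ∨ a = 1 := by
  revert a; decide

lemma sg_add (a b : ZMod 2) : sg (a + b) = sg a * sg b := by
  rcases zmod2_cases a with rfl | rfl <;> rcases zmod2_cases b with rfl | rfl <;>
    simp [sg, show (1 + 1 : ZMod 2) = 0 from rfl]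

lemma sg_zero : sg 0 = 1 := by simp [sg]

lemma sg_pm (a : ZMod 2) : sg a = 1 ∨ sg a = -1 := by
  unfold sg; split_ifs <;> simp

lemma sg_sum (s : Finset ι) (f : ι → ZMod 2) : sg (∑ i ∈ s, f i) = ∏ i ∈ s, sg (f i) := by
  classical
  induction s using Finset.induction_on with
  | empty => simp [sg_zero]
  | insert i s hi ih => rw [sum_insert hi, prod_insert hi, sg_add, ih]

lemma pow_hWt (y : ℝ) (v : ι → ZMod 2) : y ^ hWt v = ∏ i, (if v i ≠ 0 then y else 1) := by
  rw [hWt, prod_ite]; simp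

lemma hWt_le (v : ι → ZMod 2) : hWt v ≤ Fintype.card ι := by
  rw [hWt]; exact card_le_univ _

lemma prod_form [DecidableEq ι] (y : ℝ) (c : ι → ZMod 2) :
    ∑ v : ι → ZMod 2, y ^ hWt v * sg (∑ i, v i * c i)
      = (1 - y) ^ hWt c * (1 + y) ^ (Fintype.card ι - hWt c) := by
  have h1 : ∀ v : ι → ZMod 2, y ^ hWt v * sg (∑ i, v i * c i)
      = ∏ i, ((if v i ≠ 0 then y else 1) * sg (v i * c i)) := by
    intro v
    rw [prod_mul_distrib, ← pow_hWt, ← sg_sum]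
  simp_rw [h1]
  have h2 := (Finset.prod_univ_sum (fun _ : ι => (univ : Finset (ZMod 2)))
    (fun i a => (if a ≠ 0 then y else 1) * sg (a * c i)))
  rw [Fintype.piFinset_univ] at h2
  rw [← h2]
  have h3 : ∀ i, ∑ a : ZMod 2, ((if a ≠ 0 then y else 1) * sg (a * c i))
      = if c i ≠ 0 then 1 - y else 1 + y := by
    intro i
    rw [show (univ : Finset (ZMod 2)) = {0, 1} from rfl, sum_pair (by decide)]
    rcases zmod2_cases (c i) with h | h <;> rw [h] <;> simp [sg]
    ring
  simp_rw [h3]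
  rw [prod_ite, prod_const, prod_const, hWt]
  congr 2
  rw [← card_compl, compl_filter]

open Classical in
lemma char_sum (D : Submodule (ZMod 2) (ι → ZMod 2)) (χ : (ι → ZMod 2) → ℝ)
    (hmul : ∀ c ∈ D, ∀ d ∈ D, χ (c + d) = χ c * χ d) (hpm : ∀ c ∈ D, χ c = 1 ∨ χ c = -1) :
    ∑ c ∈ univ.filter (· ∈ D), χ c
      = if ∀ c ∈ D, χ c = 1 then ((univ.filter (· ∈ D)).card : ℝ) else 0 := by
  split_ifs with h
  · rw [sum_congr rfl (g := fun _ => (1:ℝ))]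
    · simp
    · intro c hc; exact h c (by simpa using hc)
  · push Not at h
    obtain ⟨d, hd, hne⟩ := h
    have hd1 : χ d = -1 := (hpm d hd).resolve_left hne
    have : ∑ c ∈ univ.filter (· ∈ D), χ c = ∑ c ∈ univ.filter (· ∈ D), χ (c + d) := by
      refine (sum_bij (fun c _ => c + d) ?_ ?_ ?_ ?_).symm
      · intro c hc; simp at hc ⊢; exact D.add_mem hc hd
      · intro c _ c' _ h; exact add_right_cancel h
      · intro c hc; simp at hc
        exact ⟨c - d, by simpa using D.sub_mem hc hd, by simp⟩
      · intro c _; rfl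
    have h2 : ∑ c ∈ univ.filter (· ∈ D), χ (c + d) = -∑ c ∈ univ.filter (· ∈ D), χ c := by
      rw [← sum_neg_distrib]
      refine sum_congr rfl fun c hc => ?_
      rw [hmul c (by simpa using hc) d hd, hd1]; ring
    linarith

open Classical in
lemma macw (D : Submodule (ZMod 2) (ι → ZMod 2)) (χ : (ι → ZMod 2) → ℝ)
    (hmul : ∀ c ∈ D, ∀ d ∈ D, χ (c + d) = χ c * χ d) (hpm : ∀ c ∈ D, χ c = 1 ∨ χ c = -1) (y : ℝ) :
    ∑ c ∈ univ.filter (· ∈ D), χ c * ((1 - y) ^ hWt c * (1 + y) ^ (Fintype.card ι - hWt c))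
      = ((univ.filter (· ∈ D)).card : ℝ) *
        ∑ v ∈ univ.filter (fun v : ι → ZMod 2 => ∀ c ∈ D, sg (∑ i, v i * c i) = χ c), y ^ hWt v := by
  simp_rw [← prod_form, mul_sum]
  rw [sum_comm, sum_filter]
  refine sum_congr rfl fun v _ => ?_
  have h1 : ∀ c, χ c * (y ^ hWt v * sg (∑ i, v i * c i)) = y ^ hWt v * (χ c * sg (∑ i, v i * c i)) := by
    intro c; ring
  simp_rw [h1]
  rw [← mul_sum, char_sum D (fun c => χ c * sg (∑ i, v i * c i))]
  · have h2 : (∀ c ∈ D, χ c * sg (∑ i, v i * c i) = 1) ↔ (∀ c ∈ D, sg (∑ i, v i * c i) = χ c) := by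
      refine forall₂_congr fun c hc => ?_
      rcases hpm c hc with h | h <;> rcases sg_pm (∑ i, v i * c i) with h' | h' <;> rw [h, h'] <;> norm_num
    simp only [h2]
    split_ifs <;> ring
  · intro c hc d hd
    simp only [Pi.add_apply, mul_add, sum_add_distrib, sg_add, hmul c hc d hd]
    ring
  · intro c hc
    rcases hpm c hc with h | h <;> rcases sg_pm (∑ i, v i * c i) with h' | h' <;> rw [h, h'] <;> norm_num

/-! weights -/
lemma hWt_zero : hWt (0 : ι → ZMod 2) = 0 := by simp [hWt]

lemma hWt_eq_zero {c : ι → ZMod 2} (h : hWt c = 0) : c = 0 := by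
  rw [hWt, card_eq_zero, filter_eq_empty_iff] at h
  funext i
  simpa using h (mem_univ i)

lemma cast_inner (c d : ι → ZMod 2) :
    ∑ i, c i * d i = ((univ.filter fun i => c i ≠ 0 ∧ d i ≠ 0).card : ZMod 2) := by
  rw [card_filter, Nat.cast_sum]
  refine sum_congr rfl fun i _ => ?_
  generalize c i = a
  generalize d i = b
  revert a b; decide

lemma hWt_add (c d : ι → ZMod 2) :
    hWt (c + d) + 2 * (univ.filter fun i => c i ≠ 0 ∧ d i ≠ 0).card = hWt c + hWt d := by
  simp only [hWt, card_filter]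
  rw [mul_sum, ← sum_add_distrib, ← sum_add_distrib]
  refine sum_congr rfl fun i _ => ?_
  rw [Pi.add_apply]
  generalize c i = a
  generalize d i = b
  revert a b; decide

lemma sd_inner {D : Submodule (ZMod 2) (ι → ZMod 2)} (hD : SelfDual2 D) {c d : ι → ZMod 2}
    (hc : c ∈ D) (hd : d ∈ D) : ∑ i, c i * d i = 0 := by
  have : c ∈ dual2 (D : Set (ι → ZMod 2)) := by rw [← hD]; exact hc
  exact this d hd

lemma sd_even {D : Submodule (ZMod 2) (ι → ZMod 2)} (hD : SelfDual2 D) {c : ι → ZMod 2}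
    (hc : c ∈ D) : Even (hWt c) := by
  have := sd_inner hD hc hc
  rw [cast_inner, ZMod.natCast_eq_zero_iff_even] at this
  simpa [hWt] using this

noncomputable def chi (c : ι → ZMod 2) : ℝ := (-1) ^ (hWt c / 2)

lemma chi_pm (c : ι → ZMod 2) : chi c = 1 ∨ chi c = -1 := neg_one_pow_eq_or ℝ _

lemma chi_mul {D : Submodule (ZMod 2) (ι → ZMod 2)} (hD : SelfDual2 D) {c d : ι → ZMod 2}
    (hc : c ∈ D) (hd : d ∈ D) : chi (c + d) = chi c * chi d := by
  have h1 := hWt_add c d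
  have h2 := sd_inner hD hc hd
  rw [cast_inner, ZMod.natCast_eq_zero_iff_even] at h2
  obtain ⟨m, hm⟩ := h2
  obtain ⟨p, hp⟩ := sd_even hD hc
  obtain ⟨q, hq⟩ := sd_even hD hd
  rw [chi, chi, chi, ← pow_add]
  have : hWt c / 2 + hWt d / 2 = hWt (c + d) / 2 + 2 * m := by omega
  rw [this, pow_add, pow_mul]
  simp

lemma chi_one {c : ι → ZMod 2} (h : 4 ∣ hWt c) : chi c = 1 := by
  obtain ⟨m, hm⟩ := h
  rw [chi, show hWt c / 2 = 2 * m by omega, pow_mul]; simp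

lemma chi_neg {c : ι → ZMod 2} (he : Even (hWt c)) (h : ¬ 4 ∣ hWt c) : chi c = -1 := by
  obtain ⟨m, hm⟩ := he
  rw [chi]
  exact Odd.neg_one_pow (by rw [Nat.odd_iff]; omega)

/-- the generalized shadow -/
def SS (D : Submodule (ZMod 2) (ι → ZMod 2)) (v : ι → ZMod 2) : Prop :=
  ∀ c ∈ D, sg (∑ i, v i * c i) = chi c

lemma sg_eq_one {a : ZMod 2} : sg a = 1 ↔ a = 0 := by
  rcases zmod2_cases a with rfl | rfl <;> simp [sg]; norm_num

lemma mem_shadow {D : Submodule (ZMod 2) (ι → ZMod 2)} (hD : SelfDual2 D)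
    (hs : SinglyEven (D : Set (ι → ZMod 2))) (v : ι → ZMod 2) :
    v ∈ shadow (D : Set (ι → ZMod 2)) ↔ SS D v := by
  constructor
  · rintro ⟨h1, h2⟩
    have h3 : ∃ c ∈ D, ∑ i, v i * c i ≠ 0 := by
      by_contra! h
      apply h2
      rw [hD]
      exact h
    obtain ⟨c, hc, hne⟩ := h3
    have hc4 : ¬ 4 ∣ hWt c := fun h4 => hne (h1 c ⟨hc, h4⟩)
    intro d hd
    by_cases hd4 : 4 ∣ hWt d
    · rw [chi_one hd4, h1 d ⟨hd, hd4⟩, sg_zero]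
    · have hcd : 4 ∣ hWt (c + d) := by
        by_contra h
        have e := chi_mul hD hc hd
        rw [chi_neg (sd_even hD hc) hc4, chi_neg (sd_even hD hd) hd4,
          chi_neg (sd_even hD (D.add_mem hc hd)) h] at e
        norm_num at e
      have h5 := h1 (c + d) ⟨D.add_mem hc hd, hcd⟩
      simp only [Pi.add_apply, mul_add, sum_add_distrib] at h5
      have h6 : sg (∑ i, v i * c i) = -1 := (sg_pm _).resolve_left (fun h => hne (sg_eq_one.mp h))
      have h7 := sg_add (∑ i, v i * c i) (∑ i, v i * d i)
      rw [h5, sg_zero, h6] at h7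
      rw [chi_neg (sd_even hD hd) hd4]
      linarith
  · intro h
    refine ⟨fun c hc => ?_, fun hv => ?_⟩
    · have := h c hc.1
      rw [chi_one hc.2] at this
      exact sg_eq_one.mp this
    · obtain ⟨c, hc, h4⟩ := hs
      have := h c hc
      rw [sd_inner hD hv hc, sg_zero, chi_neg (sd_even hD hc) h4] at this
      norm_num at this

section enum
open Polynomial

open Classical in
lemma card_D {N : ℕ} (hn : Fintype.card ι = 2 * N) {D : Submodule (ZMod 2) (ι → ZMod 2)} (hD : SelfDual2 D) :
    ((univ.filter (· ∈ D)).card : ℝ) = 2 ^ N ∧ ∀ y : ℝ,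
    ∑ c ∈ univ.filter (· ∈ D), ((1 - y) ^ hWt c * (1 + y) ^ (2 * N - hWt c))
      = 2 ^ N * ∑ c ∈ univ.filter (· ∈ D), y ^ hWt c := by
  have h := fun y => macw D (fun _ => 1) (by simp) (by simp) y
  have hS : univ.filter (fun v : ι → ZMod 2 => ∀ c ∈ D, sg (∑ i, v i * c i) = 1) = univ.filter (· ∈ D) := by
    ext v
    simp only [mem_filter, mem_univ, true_and, sg_eq_one]
    have : v ∈ D ↔ v ∈ dual2 (D : Set (ι → ZMod 2)) := by rw [← hD]; rfl
    rw [this]; rfl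
  simp only [hS, one_mul, hn] at h
  have hc : ((univ.filter (· ∈ D)).card : ℝ) = 2 ^ N := by
    have h1 := h 1
    rw [sum_eq_single 0] at h1
    · simp only [hWt_zero, pow_zero, one_mul, Nat.sub_zero, one_pow, sum_const, nsmul_eq_mul, mul_one] at h1
      have h2 : ((univ.filter (· ∈ D)).card : ℝ) ^ 2 = (2 ^ N) ^ 2 := by
        rw [← pow_mul, mul_comm N 2, sq, ← h1]; norm_num
      exact (sq_eq_sq₀ (by positivity) (by positivity)).mp h2
    · intro c _ hc
      have : hWt c ≠ 0 := fun h => hc (hWt_eq_zero h)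
      simp [this]
    · intro h0; exact absurd (by simp) h0
  refine ⟨hc, fun y => ?_⟩
  rw [h y, hc]

open Classical in
noncomputable def Wp (D : Submodule (ZMod 2) (ι → ZMod 2)) : ℝ[X] := ∑ c ∈ univ.filter (· ∈ D), X ^ hWt c
open Classical in
noncomputable def Vp (D : Submodule (ZMod 2) (ι → ZMod 2)) : ℝ[X] := ∑ c ∈ univ.filter (· ∈ D), X ^ (hWt c / 2)
open Classical in
noncomputable def Sp (D : Submodule (ZMod 2) (ι → ZMod 2)) : ℝ[X] := ∑ v ∈ univ.filter (SS D), X ^ hWt v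

lemma Wp_inv {N : ℕ} (hn : Fintype.card ι = 2 * N) {D : Submodule (ZMod 2) (ι → ZMod 2)} (hD : SelfDual2 D) :
    Gle.Inv N (Wp D) := by
  classical
  refine ⟨?_, ?_, ?_⟩
  · refine natDegree_sum_le_of_forall_le _ _ fun c _ => ?_
    rw [natDegree_X_pow, ← hn]; exact hWt_le c
  · rw [Wp, ← coe_compRingHom_apply, map_sum]
    simp only [coe_compRingHom_apply]
    refine sum_congr rfl fun c hc => ?_
    rw [X_pow_comp, (sd_even hD (by simpa using hc)).neg_pow]
  · intro y hy
    have hy0 : 1 + y ≠ 0 := by linarith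
    have h := (card_D hn hD).2 y
    simp only [Wp, eval_finsetSum, eval_pow, eval_X]
    rw [← h, mul_sum]
    refine sum_congr rfl fun c _ => ?_
    have := hWt_le c
    obtain ⟨r, hr⟩ : ∃ r, 2 * N = hWt c + r := ⟨2 * N - hWt c, by omega⟩
    rw [hr, Nat.add_sub_cancel_left, pow_add, div_pow]
    field_simp

lemma Wp_V {D : Submodule (ZMod 2) (ι → ZMod 2)} (hD : SelfDual2 D) (y : ℝ) :
    (Wp D).eval y = (Vp D).eval (y ^ 2) := by
  classical
  simp only [Wp, Vp, eval_finsetSum, eval_pow, eval_X]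
  refine sum_congr rfl fun c hc => ?_
  obtain ⟨m, hm⟩ := sd_even hD (c := c) (by simpa using hc)
  rw [← pow_mul]; congr 1; omega

lemma Sp_eval {N : ℕ} (hn : Fintype.card ι = 2 * N) {D : Submodule (ZMod 2) (ι → ZMod 2)} (hD : SelfDual2 D)
    (y : ℝ) (hy : 1 + y ≠ 0) :
    2 ^ N * (Sp D).eval y = (1 + y) ^ (2 * N) * (Vp D).eval (-((1 - y) / (1 + y)) ^ 2) := by
  classical
  have h := macw D chi (fun c hc d hd => chi_mul hD hc hd) (fun c _ => chi_pm c) y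
  rw [(card_D hn hD).1, hn] at h
  simp only [Sp, Vp, eval_finsetSum, eval_pow, eval_X]
  have h' : _ = 2 ^ N * ∑ v ∈ univ.filter (SS D), y ^ hWt v :=
    h.trans (by
      congr 1
      refine sum_congr ?_ fun _ _ => rfl
      ext v; simp [SS])
  rw [← h', mul_sum]
  refine sum_congr rfl fun c hc => ?_
  obtain ⟨m, hm⟩ := sd_even hD (c := c) (by simpa using hc)
  have := hWt_le c
  obtain ⟨r, hr⟩ : ∃ r, 2 * N = hWt c + r := ⟨2 * N - hWt c, by omega⟩
  rw [chi, hr, Nat.add_sub_cancel_left, pow_add, show hWt c / 2 = m by omega, hm, ← two_mul, neg_pow (((1 - y) / (1 + y)) ^ 2),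
    ← pow_mul, div_pow]
  field_simp

theorem enum {N : ℕ} (hn : Fintype.card ι = 2 * N) {D : Submodule (ZMod 2) (ι → ZMod 2)} (hD : SelfDual2 D) :
    ∃ a : ℕ → ℝ,
      Vp D = ∑ i ∈ range (N / 4 + 1), C (a i) * ((1 + X) ^ (N - 4 * i) * (X * (1 - X) ^ 2) ^ i) ∧
      C (2 ^ N) * Sp D = ∑ i ∈ range (N / 4 + 1),
        C (a i * (-1) ^ i * 4 ^ (N - 3 * i)) * (X ^ (N - 4 * i) * (1 - X ^ 4) ^ (2 * i)) := by
  obtain ⟨a, ha⟩ := Gle.gleason N _ (Wp_inv hn hD)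
  have hV : Vp D = ∑ i ∈ range (N / 4 + 1), C (a i) * ((1 + X) ^ (N - 4 * i) * (X * (1 - X) ^ 2) ^ i) := by
    refine Gle.eq_of_gt_one _ _ fun z hz => ?_
    have hs : (Real.sqrt z) ^ 2 = z := Real.sq_sqrt (by linarith)
    have h1 := Wp_V hD (Real.sqrt z)
    rw [ha, hs] at h1
    rw [← h1]
    simp only [eval_finsetSum, eval_mul, eval_C, eval_pow, eval_X, eval_add, eval_one, eval_sub, Gle.psi, hs]
  refine ⟨a, hV, Gle.eq_of_gt_one _ _ fun y hy => ?_⟩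
  have hy0 : 1 + y ≠ 0 := by linarith
  rw [eval_mul, eval_C, Sp_eval hn hD y hy0, hV]
  simp only [eval_finsetSum, eval_mul, eval_C, eval_pow, eval_X, eval_add, eval_one, eval_sub]
  rw [mul_sum]
  refine sum_congr rfl fun i hi => ?_
  rw [mem_range] at hi
  obtain ⟨M, hM⟩ : ∃ M, N = M + 4 * i := ⟨N - 4 * i, by omega⟩
  rw [show N - 4 * i = M by omega, show N - 3 * i = M + i by omega, hM]
  have e1 : 1 + -((1 - y) / (1 + y)) ^ 2 = 4 * y / (1 + y) ^ 2 := by field_simp; ring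
  have e2 : -((1 - y) / (1 + y)) ^ 2 * (1 - -((1 - y) / (1 + y)) ^ 2) ^ 2
      = -(4 * (1 - y ^ 4) ^ 2) / ((1 + y) ^ 2) ^ 4 := by
    field_simp; ring
  rw [e1, e2, div_pow, div_pow, ← pow_mul, ← pow_mul, ← pow_mul, neg_pow (4 * (1 - y ^ 4) ^ 2), mul_pow, mul_pow, ← pow_mul,
    show 2 * (M + 4 * i) = 2 * M + 2 * 4 * i by ring, pow_add, pow_add]
  field_simp
  ring

lemma Sp_coeff (D : Submodule (ZMod 2) (ι → ZMod 2)) (j : ℕ) :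
    (∃ v, SS D v ∧ hWt v = j) ↔ (Sp D).coeff j ≠ 0 := by
  classical
  have : (Sp D).coeff j = ((univ.filter fun v => SS D v ∧ j = hWt v).card : ℝ) := by
    rw [Sp, finsetSum_coeff]
    simp only [coeff_X_pow]
    rw [sum_boole, filter_filter]
  rw [this]
  simp only [ne_eq, Nat.cast_eq_zero, card_eq_zero, filter_eq_empty_iff]
  push Not
  simp [eq_comm]

lemma Vp_coeff (D : Submodule (ZMod 2) (ι → ZMod 2)) (j : ℕ) (h : ∀ c ∈ D, hWt c / 2 ≠ j) :
    (Vp D).coeff j = 0 := by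
  classical
  rw [Vp, finsetSum_coeff]
  refine sum_eq_zero fun c hc => ?_
  rw [coeff_X_pow, if_neg]
  exact fun e => h c (by simpa using hc) e.symm

lemma Vp_coeff_zero {D : Submodule (ZMod 2) (ι → ZMod 2)} (hD : SelfDual2 D) : (Vp D).coeff 0 = 1 := by
  classical
  rw [Vp, finsetSum_coeff, sum_eq_single 0]
  · simp [hWt_zero]
  · intro c hc h0
    rw [coeff_X_pow, if_neg]
    intro e
    obtain ⟨m, hm⟩ := sd_even hD (c := c) (by simpa using hc)
    exact h0 (hWt_eq_zero (by omega))
  · intro h; exact absurd (by simp) h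

lemma term_coeff (N i j : ℕ) (b : ℝ) (hi : 4 * i ≤ N)
    (h : (C b * (X ^ (N - 4 * i) * (1 - X ^ 4) ^ (2 * i)) : ℝ[X]).coeff j ≠ 0) :
    j % 4 = N % 4 ∧ N - 4 * i ≤ j := by
  rw [coeff_C_mul, coeff_X_pow_mul'] at h
  split_ifs at h with hj
  · refine ⟨?_, hj⟩
    have e : ((1 - X ^ 4) ^ (2 * i) : ℝ[X]) = expand ℝ 4 ((1 - X) ^ (2 * i)) := by simp
    rw [e, coeff_expand (by norm_num)] at h
    split_ifs at h with h4
    · omega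
    · simp at h
  · simp at h

/-- shadow weights are congruent to N mod 4 -/
lemma shadow_mod {N : ℕ} (hn : Fintype.card ι = 2 * N) {D : Submodule (ZMod 2) (ι → ZMod 2)} (hD : SelfDual2 D)
    (v : ι → ZMod 2) (hv : SS D v) : hWt v % 4 = N % 4 := by
  obtain ⟨a, -, ha⟩ := enum hn hD
  by_contra hne
  have h1 := (Sp_coeff D (hWt v)).mp ⟨v, hv, rfl⟩
  have h2 := congrArg (fun p => p.coeff (hWt v)) ha
  simp only [finsetSum_coeff] at h2
  rw [coeff_C_mul, sum_eq_zero] at h2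
  · have : (2:ℝ) ^ N ≠ 0 := by positivity
    exact (mul_ne_zero this h1) h2
  · intro i hi
    rw [mem_range] at hi
    by_contra h3
    exact hne (term_coeff N i _ _ (by omega) h3).1

/-- main analytic lemma -/
lemma main_ineq {N m : ℕ} (hn : Fintype.card ι = 2 * N) {D : Submodule (ZMod 2) (ι → ZMod 2)} (hD : SelfDual2 D)
    (hm : 1 ≤ m) (hN : 4 * m ≤ N + 1)
    (hpos : PowerSeries.coeff (m - 1) (Lag.E ^ (N + 1 - 4 * m) * Lag.G ^ (2 * m)) ≠ 0)
    (hDw : ∀ c ∈ D, ∀ j, 1 ≤ j → j ≤ m → hWt c / 2 ≠ j)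
    (hSw : ∀ v, SS D v → ∀ i, m ≤ i → 4 * i ≤ N → hWt v ≠ N - 4 * i) : False := by
  obtain ⟨a, hV, hS⟩ := enum hn hD
  have ha : ∀ i, m ≤ i → i < N / 4 + 1 → a i = 0 := by
    by_contra! hex
    -- the largest index with nonzero coefficient
    set s := (range (N / 4 + 1)).filter (fun i => m ≤ i ∧ a i ≠ 0) with hs
    have hne : s.Nonempty := by
      obtain ⟨i, h1, h2, h3⟩ := hex
      exact ⟨i, by simp [hs, h1, h2, h3]⟩
    set t := s.max' hne with ht
    have hts : t ∈ s := s.max'_mem hne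
    have htmax : ∀ i ∈ s, i ≤ t := fun i hi => s.le_max' i hi
    simp only [hs, mem_filter, mem_range] at hts htmax
    obtain ⟨ht1, ht2, ht3⟩ := hts
    have h2 := congrArg (fun p => p.coeff (N - 4 * t)) hS
    simp only [finsetSum_coeff] at h2
    rw [coeff_C_mul, sum_eq_single t] at h2
    · have h3 : (X ^ (N - 4 * t) * (1 - X ^ 4) ^ (2 * t) : ℝ[X]).coeff (N - 4 * t) = 1 := by
        rw [coeff_X_pow_mul', if_pos le_rfl, Nat.sub_self, coeff_zero_eq_eval_zero]
        simp
      rw [coeff_C_mul, h3, mul_one] at h2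
      have h4 : (Sp D).coeff (N - 4 * t) ≠ 0 := by
        intro h0
        rw [h0, mul_zero] at h2
        have : a t * (-1) ^ t * 4 ^ (N - 3 * t) ≠ 0 :=
          mul_ne_zero (mul_ne_zero ht3 (pow_ne_zero _ (by norm_num))) (by positivity)
        exact this h2.symm
      obtain ⟨v, hv, hw⟩ := (Sp_coeff D _).mpr h4
      exact hSw v hv t ht2 (by omega) hw
    · intro i hi hit
      rw [mem_range] at hi
      by_contra h3
      have h4 := (term_coeff N i _ _ (by omega) h3).2
      have h5 : t < i := by omega
      have h6 : a i ≠ 0 := by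
        intro h0; simp [h0] at h3
      exact absurd (htmax i ⟨hi, by omega, h6⟩) (by omega)
    · intro h; exact absurd (mem_range.mpr ht1) h
  have hV2 : Vp D = ∑ i ∈ range m, C (a i) * ((1 + X) ^ (N - 4 * i) * (X * (1 - X) ^ 2) ^ i) := by
    rw [hV]
    symm
    apply sum_subset
    · intro i hi; rw [mem_range] at *; omega
    · intro i h1 h2
      rw [mem_range] at h1 h2
      rw [ha i (by omega) h1]; simp
  refine hpos (Lag.lagrange N m hm hN a (Vp D : PowerSeries ℝ) ?_ ?_ ?_)
  · rw [hV2]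
    rw [← Polynomial.coeToPowerSeries.ringHom_apply, map_sum]
    refine sum_congr rfl fun i _ => ?_
    simp only [map_mul, map_pow, map_add, map_sub, map_one, Polynomial.coeToPowerSeries.ringHom_apply,
      Polynomial.coe_C, Polynomial.coe_X]
  · rw [Polynomial.coeff_coe]; exact Vp_coeff_zero hD
  · intro j h1 h2
    rw [Polynomial.coeff_coe]
    exact Vp_coeff D j fun c hc => hDw c hc j h1 h2
end enum

/-! The quaternary side -/
def dbl (a : ZMod 2) : ZMod 4 := if a = 0 then 0 else 2

def dblHom : ZMod 2 →+ ZMod 4 where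
  toFun := dbl
  map_zero' := rfl
  map_add' := by decide

def dv (v : ι → ZMod 2) : ι → ZMod 4 := fun i => dbl (v i)

lemma dbl_mul (a : ZMod 2) (x : ZMod 4) :
    dbl a * x = dblHom (a * ZMod.castHom (by norm_num : (2:ℕ) ∣ 4) (ZMod 2) x) := by
  revert a x; decide

lemma dv_mem {C : Submodule (ZMod 4) (ι → ZMod 4)} (hC : SelfDualZ4 C) (v : ι → ZMod 2)
    (hv : ∀ x ∈ C, ∑ i, v i * res2 x i = 0) : dv v ∈ C := by
  have : dv v ∈ dualZ4 (C : Set (ι → ZMod 4)) := by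
    intro x hx
    have h := hv x hx
    have h2 := congrArg dblHom h
    rw [map_sum, map_zero] at h2
    rw [← h2]
    exact sum_congr rfl fun i _ => dbl_mul _ _
  rw [← hC] at this
  exact this

lemma leeWt_dv (v : ι → ZMod 2) : leeWt (dv v) = 2 * hWt v := by
  rw [leeWt, hWt, card_filter, mul_sum]
  refine sum_congr rfl fun i _ => ?_
  rw [dv]
  generalize v i = a
  revert a; decide

lemma dv_ne {v : ι → ZMod 2} (h : v ≠ 0) : dv v ≠ 0 := by
  intro h0
  apply h
  funext i
  have := congrFun h0 i
  simp only [dv, Pi.zero_apply] at this ⊢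
  revert this
  generalize v i = a
  revert a; decide

lemma wt_bound {C : Submodule (ZMod 4) (ι → ZMod 4)} (hC : SelfDualZ4 C) {d : ℕ}
    (hd : minLee (C : Set (ι → ZMod 4)) = d) (v : ι → ZMod 2) (h0 : v ≠ 0)
    (hv : ∀ x ∈ C, ∑ i, v i * res2 x i = 0) : d ≤ 2 * hWt v := by
  rw [← hd, ← leeWt_dv]
  exact Nat.sInf_le ⟨dv v, dv_mem hC v hv, dv_ne h0, rfl⟩

lemma res_four {C : Submodule (ZMod 4) (ι → ZMod 4)} (hC : SelfDualZ4 C) (x : ι → ZMod 4) (hx : x ∈ C) :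
    4 ∣ hWt (res2 x) := by
  have h1 : x ∈ dualZ4 (C : Set (ι → ZMod 4)) := by rw [← hC]; exact hx
  have h2 := h1 x hx
  have h3 : ∑ i, x i * x i = ((hWt (res2 x) : ℕ) : ZMod 4) := by
    rw [hWt, card_filter, Nat.cast_sum]
    refine sum_congr rfl fun i _ => ?_
    rw [res2]
    generalize x i = a
    revert a; decide
  rw [h3] at h2
  exact (ZMod.natCast_eq_zero_iff _ 4).mp h2

lemma sInf_eq {s : Set ℕ} {d : ℕ} (h1 : d ∈ s) (h2 : ∀ e ∈ s, d ≤ e) : sInf s = d :=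
  le_antisymm (Nat.sInf_le h1) (le_csInf ⟨d, h1⟩ h2)

theorem core {k N a b : ℕ} (hk : 0 < k)
    (hab : (a = 14 ∧ b = 6) ∨ (a = 18 ∧ b = 8) ∨ (a = 20 ∧ b = 8))
    (hN : 24 * k + a = 2 * N) (hn : Fintype.card ι = 2 * N)
    (C : Submodule (ZMod 4) (ι → ZMod 4)) (hsd : SelfDualZ4 C)
    (hlee : minLee (C : Set (ι → ZMod 4)) = 8 * k + b)
    (D : Submodule (ZMod 2) (ι → ZMod 2)) (hD : SelfDual2 D)
    (hres : residue (C : Set (ι → ZMod 4)) ⊆ (D : Set (ι → ZMod 2))) :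
    SExtremal D ∧ minHam (D : Set (ι → ZMod 2)) = 4 * k + 4 := by
  have hDw : ∀ c ∈ D, c ≠ 0 → 4 * k + 4 ≤ hWt c := by
    intro c hc h0
    have h1 := wt_bound hsd hlee c h0 fun x hx => sd_inner hD hc (hres ⟨x, hx, rfl⟩)
    obtain ⟨m, hm⟩ := sd_even hD hc
    omega
  have hmod := shadow_mod hn hD
  have hS0 : ∀ v, SS D v → v ≠ 0 := by
    rintro v hv rfl
    have := hmod 0 hv
    rw [hWt_zero] at this
    omega
  have hSE : SinglyEven (D : Set (ι → ZMod 2)) := by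
    by_contra h
    refine hS0 0 ?_ rfl
    intro c hc
    have h4 : 4 ∣ hWt c := by
      by_contra h4; exact h ⟨c, hc, h4⟩
    rw [chi_one h4]; simp [sg_zero]
  have hSw : ∀ v, SS D v → N - (8 * k + 4) ≤ hWt v := by
    intro v hv
    have h1 := wt_bound hsd hlee v (hS0 v hv) fun x hx => by
      have := hv (res2 x) (hres ⟨x, hx, rfl⟩)
      rw [chi_one (res_four hsd x hx)] at this
      exact sg_eq_one.mp this
    have h2 := hmod v hv
    omega
  have ex1 : ∃ c ∈ D, hWt c = 4 * k + 4 := by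
    by_contra! hne
    refine main_ineq (m := 2 * k + 2) hn hD (by omega) (by omega) ?_ ?_ ?_
    · rcases hab with ⟨rfl, rfl⟩ | ⟨rfl, rfl⟩ | ⟨rfl, rfl⟩
      · rw [show N + 1 - 4 * (2 * k + 2) = (4 * k - 1) + 1 by omega,
          show 2 * (2 * k + 2) = (4 * k - 1) + 1 + (3 + 1) by omega]
        exact Lag.pos1 _ _ _
      · rw [show N + 1 - 4 * (2 * k + 2) = (4 * k + 1) + 1 by omega,
          show 2 * (2 * k + 2) = (4 * k + 1) + 1 + (1 + 1) by omega]
        exact Lag.pos1 _ _ _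
      · rw [show N + 1 - 4 * (2 * k + 2) = (4 * k + 2) + 1 by omega,
          show 2 * (2 * k + 2) = (4 * k + 2) + 1 + (0 + 1) by omega]
        exact Lag.pos1 _ _ _
    · intro c hc j h1 h2 h3
      have h0 : c ≠ 0 := by
        rintro rfl; rw [hWt_zero] at h3; omega
      have := hDw c hc h0
      have := hne c hc
      obtain ⟨m, hm⟩ := sd_even hD hc
      omega
    · intro v hv i h1 h2 h3
      have := hSw v hv
      omega
  have ex2 : ∃ v, SS D v ∧ hWt v = N - (8 * k + 4) := by
    by_contra! hne
    refine main_ineq (m := 2 * k + 1) hn hD (by omega) (by omega) ?_ ?_ ?_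
    · have he : Even (2 * k + 1 - 1) := ⟨k, by omega⟩
      rcases hab with ⟨rfl, rfl⟩ | ⟨rfl, rfl⟩ | ⟨rfl, rfl⟩
      · rw [show N + 1 - 4 * (2 * k + 1) = (4 * k + 1) + 1 + 2 by omega,
          show 2 * (2 * k + 1) = (4 * k + 1) + 1 by omega]
        exact Lag.pos_two _ _ he
      · rw [show N + 1 - 4 * (2 * k + 1) = (4 * k + 1) + 1 + 4 by omega,
          show 2 * (2 * k + 1) = (4 * k + 1) + 1 by omega]
        exact Lag.pos_four _ _ he
      · rw [show N + 1 - 4 * (2 * k + 1) = (4 * k + 1) + 1 + 5 by omega,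
          show 2 * (2 * k + 1) = (4 * k + 1) + 1 by omega]
        exact Lag.pos_five _ _ he
    · intro c hc j h1 h2 h3
      have h0 : c ≠ 0 := by
        rintro rfl; rw [hWt_zero] at h3; omega
      have := hDw c hc h0
      omega
    · intro v hv i h1 h2 h3
      have := hSw v hv
      have := hne v hv
      omega
  have hmin : minHam (D : Set (ι → ZMod 2)) = 4 * k + 4 := by
    refine sInf_eq ?_ ?_
    · obtain ⟨c, hc, hw⟩ := ex1
      refine ⟨c, hc, ?_, hw⟩
      rintro rfl
      rw [hWt_zero] at hw; omega
    · rintro e ⟨c, hc, h0, rfl⟩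
      exact hDw c hc h0
  have hminS : minHam (shadow (D : Set (ι → ZMod 2))) = N - (8 * k + 4) := by
    refine sInf_eq ?_ ?_
    · obtain ⟨v, hv, hw⟩ := ex2
      exact ⟨v, (mem_shadow hD hSE v).mpr hv, hS0 v hv, hw⟩
    · rintro e ⟨v, hv, h0, rfl⟩
      exact hSw v ((mem_shadow hD hSE v).mp hv)
  refine ⟨⟨hD, hSE, ?_, ?_⟩, hmin⟩
  · intro _
    rw [hmin, hminS, hn]
    omega
  · rintro ⟨h, -⟩
    rw [hn] at h
    omega
end Aux
end Z4Note


open Z4Note in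
/-- for `(α,β) ∈ {(14,6),(18,8),(20,8)}`, any binary self-dual code
containing the residue code of a self-dual `ZMod 4`-code of length `24k+α` and minimum
Lee weight `8k+β` is s-extremal with minimum weight `4k+4`. -/
theorem sextremal_of_residue_subset_case2
    (k : ℕ) (hk : 0 < k) (a b : ℕ)
    (hab : (a, b) = (14, 6) ∨ (a, b) = (18, 8) ∨ (a, b) = (20, 8))
    (C : Submodule (ZMod 4) (Fin (24 * k + a) → ZMod 4))
    (hsd : SelfDualZ4 C)
    (hlee : minLee (C : Set (Fin (24 * k + a) → ZMod 4)) = 8 * k + b) :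
    ∀ D : Submodule (ZMod 2) (Fin (24 * k + a) → ZMod 2),
      SelfDual2 D →
      residue (C : Set (Fin (24 * k + a) → ZMod 4)) ⊆ (D : Set (Fin (24 * k + a) → ZMod 2)) →
      SExtremal D ∧ minHam (D : Set (Fin (24 * k + a) → ZMod 2)) = 4 * k + 4 := by
  intro D hD hres
  have hab' : (a = 14 ∧ b = 6) ∨ (a = 18 ∧ b = 8) ∨ (a = 20 ∧ b = 8) := by simpa using hab
  obtain ⟨N, hN⟩ : ∃ N, 24 * k + a = 2 * N := ⟨12 * k + a / 2, by omega⟩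
  exact Z4Note.Aux.core hk hab' hN ((Fintype.card_fin _).trans hN) C hsd hlee D hD hres
end
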